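/- Let 𝔸 be a relational structure that admits a chain of n Hagemann–Mitschke terms as polymorphisms and has bounded pathwidth duality (equivalently, CSP(𝔸) is decided by some linear Datalog program). Then there exists M ∈ ℕ such that 𝒫_𝔸^M decides CSP(𝔸): for every instance I of CSP(𝔸), 𝒫_𝔸^M(I) ⊢ G if and only if I is unsatisfiable. -/

import Mathlib

namespace CSPPaper

/-- A relational structure on `A`: a family of finitary relations (the basic
relations), a relation of arity `n` being a set of `n`-tuples `Fin n → A`. -/
structure RelStruct (A : Type) where
  basic : Set (Σ n : ℕ, Set (Fin n → A))

/-- A CSP instance with variables `V` over domain `A`: a set of constraints,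
each consisting of a scope (a tuple of variables) and a constraint relation. -/
structure Instance (A : Type) (V : Type) where
  constraints : Set (Σ n : ℕ, (Fin n → V) × Set (Fin n → A))

/-- `f : V → A` is a solution of the instance `I`. -/
def Instance.Sol {A V : Type} (I : Instance A V) (f : V → A) : Prop :=
  ∀ c ∈ I.constraints, (fun i => f (c.2.1 i)) ∈ c.2.2

def Instance.Satisfiable {A V : Type} (I : Instance A V) : Prop :=
  ∃ f, I.Sol f

/-- `I` is an instance of `CSP(𝔸)`: all its constraint relations are basic
relations of `𝔸`. -/
def IsCSPInstance {A V : Type} (𝔸 : RelStruct A) (I : Instance A V) : Prop :=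
  ∀ c ∈ I.constraints, (⟨c.1, c.2.2⟩ : Σ n : ℕ, Set (Fin n → A)) ∈ 𝔸.basic

/-- An atom of a Datalog rule over the variable set `Fin r`: a predicate
(a relation on `A`) applied to a tuple of variables. -/
structure Atom (A : Type) (r : ℕ) where
  arity : ℕ
  scope : Fin arity → Fin r
  rel : Set (Fin arity → A)

def Atom.holds {A : Type} {r : ℕ} (a : Atom A r) (f : Fin r → A) : Prop :=
  (fun i => f (a.scope i)) ∈ a.rel

/-- A rule of the `r`-ary maximal symmetric Datalog program `𝒫_𝔸^r` consistent
with `𝔸`: a linear Datalog rule on at most `r` variables, whose head is an IDB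
(an arbitrary relation on `A` of arity at most `r`), whose body contains at most
one IDB atom (`idb`) and otherwise non-IDB atoms for basic relations of `𝔸`
of arity at most `r` (`edb`, without repetition), such that the rule is
consistent with `𝔸`, and, if the body contains an IDB atom, its mirror image is
also consistent with `𝔸`. -/
structure Rule (A : Type) (𝔸 : RelStruct A) (r : ℕ) where
  head : Atom A r
  idb : Option (Atom A r)
  edb : List (Atom A r)
  head_arity : head.arity ≤ r
  idb_arity : ∀ a ∈ idb, a.arity ≤ r
  edb_arity : ∀ a ∈ edb, a.arity ≤ r
  edb_basic : ∀ a ∈ edb, (⟨a.arity, a.rel⟩ : Σ n : ℕ, Set (Fin n → A)) ∈ 𝔸.basic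
  nodup : edb.Nodup
  consistent : ∀ f : Fin r → A,
    (∀ a ∈ idb, a.holds f) → (∀ a ∈ edb, a.holds f) → head.holds f
  mirror : ∀ a ∈ idb, ∀ f : Fin r → A,
    head.holds f → (∀ b ∈ edb, b.holds f) → a.holds f

/-- `Derives 𝔸 r I ρ R`: the `r`-ary maximal symmetric Datalog program
`𝒫_𝔸^r` consistent with `𝔸`, run on the instance `I`, derives `R(ρ)`.
This holds if `(ρ, R)` is a constraint of `I`, or if some rule of `𝒫_𝔸^r`
with head `R(τ)` admits an evaluation `ω` of its variables into `V` with
`ω ∘ τ = ρ`, whose (at most one) IDB body atom is derived and whose non-IDB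
body atoms are constraints of `I` under `ω`. -/
inductive Derives {A V : Type} (𝔸 : RelStruct A) (r : ℕ) (I : Instance A V) :
    ∀ {n : ℕ}, (Fin n → V) → Set (Fin n → A) → Prop
  | base {n : ℕ} (ρ : Fin n → V) (R : Set (Fin n → A)) :
      (⟨n, ρ, R⟩ : Σ n : ℕ, (Fin n → V) × Set (Fin n → A)) ∈ I.constraints →
      Derives 𝔸 r I ρ R
  | step (rule : Rule A 𝔸 r) (ω : Fin r → V) :
      (∀ a ∈ rule.idb, Derives 𝔸 r I (fun i => ω (a.scope i)) a.rel) →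
      (∀ a ∈ rule.edb,
        (⟨a.arity, fun i => ω (a.scope i), a.rel⟩ :
          Σ n : ℕ, (Fin n → V) × Set (Fin n → A)) ∈ I.constraints) →
      Derives 𝔸 r I (fun i => ω (rule.head.scope i)) rule.head.rel

/-- `𝒫_𝔸^r(I) ⊢ G`: the program derives a goal predicate, i.e. an empty
relation of arity at most `r`. -/
def DerivesGoal {A V : Type} (𝔸 : RelStruct A) (r : ℕ) (I : Instance A V) : Prop :=
  ∃ (n : ℕ) (ρ : Fin n → V), n ≤ r ∧ Derives 𝔸 r I ρ (∅ : Set (Fin n → A))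

/-- `𝒫_𝔸^r(I) ⊢ J`: the program run on `I` derives every constraint of `J`. -/
def DerivesInstance {A V : Type} (𝔸 : RelStruct A) (r : ℕ) (I J : Instance A V) : Prop :=
  ∀ c ∈ J.constraints, Derives 𝔸 r I c.2.1 c.2.2

/-- An `m`-ary operation `t` preserves the `n`-ary relation `R`. -/
def PreservesRel {A : Type} {m n : ℕ} (t : (Fin m → A) → A) (R : Set (Fin n → A)) : Prop :=
  ∀ rows : Fin m → Fin n → A, (∀ j, rows j ∈ R) → (fun i => t (fun j => rows j i)) ∈ R

/-- A polymorphism of `𝔸`: an operation preserving all basic relations. -/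
def IsPolymorphism {A : Type} {m : ℕ} (𝔸 : RelStruct A) (t : (Fin m → A) → A) : Prop :=
  ∀ R ∈ 𝔸.basic, PreservesRel t R.2

def ternaryOp {A : Type} (p : A → A → A → A) : (Fin 3 → A) → A :=
  fun v => p (v 0) (v 1) (v 2)

/-- A chain of `n` Hagemann–Mitschke terms: idempotent ternary operations
`p 0, …, p n` with `p 0 x y z = x`, `p k x x y = p (k+1) x y y`, `p n x y z = z`. -/
def IsHMChain {A : Type} (n : ℕ) (p : ℕ → A → A → A → A) : Prop :=
  (∀ k ≤ n, ∀ x : A, p k x x x = x) ∧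
  (∀ x y z : A, p 0 x y z = x) ∧
  (∀ x y z : A, p n x y z = z) ∧
  (∀ k < n, ∀ x y : A, p k x x y = p (k + 1) x y y)

def Pres3Set {A : Type} (p : A → A → A → A) (S : Set A) : Prop :=
  ∀ x y z, x ∈ S → y ∈ S → z ∈ S → p x y z ∈ S

def Pres3Rel {A : Type} (p : A → A → A → A) (E : Set (A × A)) : Prop :=
  ∀ u v w, u ∈ E → v ∈ E → w ∈ E → (p u.1 v.1 w.1, p u.2 v.2 w.2) ∈ E

def PresOpSet {A : Type} {m : ℕ} (t : (Fin m → A) → A) (S : Set A) : Prop :=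
  ∀ x : Fin m → A, (∀ j, x j ∈ S) → t x ∈ S

def PresOpRel {A : Type} {m : ℕ} (t : (Fin m → A) → A) (E : Set (A × A)) : Prop :=
  ∀ x y : Fin m → A, (∀ j, (x j, y j) ∈ E) → (t x, t y) ∈ E

/-- A path instance of length `len`: variables `1, …, len`, one unary
constraint `B i` on each variable `i ∈ [1, len]`, and one binary constraint
`E i` with scope `(i, i+1)` for each `i ∈ [1, len-1]`. -/
structure PathInstance (A : Type) where
  len : ℕ
  B : ℕ → Set A
  E : ℕ → Set (A × A)

/-- A solution of the subinstance of the path instance `I` induced by `[a, b]`. -/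
def IsSolutionOn {A : Type} (I : PathInstance A) (a b : ℕ) (s : ℕ → A) : Prop :=
  (∀ i, a ≤ i → i ≤ b → s i ∈ I.B i) ∧
  (∀ i, a ≤ i → i + 1 ≤ b → (s i, s (i + 1)) ∈ I.E i)

def IsSolution {A : Type} (I : PathInstance A) (s : ℕ → A) : Prop :=
  IsSolutionOn I 1 I.len s

def unaryRel {A : Type} (S : Set A) : Set (Fin 1 → A) := {f | f 0 ∈ S}

def pairRel {A : Type} (E : Set (A × A)) : Set (Fin 2 → A) := {f | (f 0, f 1) ∈ E}

/-- The path instance `I`, presented as a CSP instance on the variable set `ℕ`. -/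
def PathInstance.toInstance {A : Type} (I : PathInstance A) : Instance A ℕ where
  constraints :=
    {c | (∃ i, 1 ≤ i ∧ i ≤ I.len ∧
            c = ⟨1, fun _ => i, unaryRel (I.B i)⟩) ∨
         (∃ i, 1 ≤ i ∧ i + 1 ≤ I.len ∧
            c = ⟨2, ![i, i + 1], pairRel (I.E i)⟩)}

/-- An `n`-braid in the path instance `I`: solutions `s 0, …, s n` and indices
`1 ≤ idx 1 < … < idx n ≤ I.len` with `s k (idx k) = s (k+1) (idx k)` and
`s (k-1) (idx (k+1)) = s k (idx (k+1))` for `k = 1, …, n-1`. -/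
def IsBraid {A : Type} (I : PathInstance A) (n : ℕ) (s : ℕ → ℕ → A) (idx : ℕ → ℕ) : Prop :=
  (∀ k ≤ n, IsSolution I (s k)) ∧
  1 ≤ idx 1 ∧ idx n ≤ I.len ∧
  (∀ k, 1 ≤ k → k < n → idx k < idx (k + 1)) ∧
  (∀ k, 1 ≤ k → k + 1 ≤ n →
    s k (idx k) = s (k + 1) (idx k) ∧ s (k - 1) (idx (k + 1)) = s k (idx (k + 1)))

/-- The binary constraint of `I` with scope `(i, i+1)` is subdirect. -/
def SubdirectAt {A : Type} (I : PathInstance A) (i : ℕ) : Prop :=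
  (I.B i).Nonempty ∧ (I.B (i + 1)).Nonempty ∧
  (∀ a ∈ I.B i, ∃ b ∈ I.B (i + 1), (a, b) ∈ I.E i) ∧
  (∀ b ∈ I.B (i + 1), ∃ a ∈ I.B i, (a, b) ∈ I.E i)

/-- The subinstance of `I` induced by `[a, b]` is subdirect. -/
def SubdirectOn {A : Type} (I : PathInstance A) (a b : ℕ) : Prop :=
  ∀ i, a ≤ i → i + 1 ≤ b → SubdirectAt I i

def Subdirect {A : Type} (I : PathInstance A) : Prop := SubdirectOn I 1 I.len

/-- The sets `C_i`: `C 1 = B 1` and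
`C (i+1) = {b ∈ B (i+1) | ∃ c ∈ C i, (c, b) ∈ E i}`. -/
def reachSet {A : Type} (I : PathInstance A) : ℕ → Set A
  | 0 => ∅
  | 1 => I.B 1
  | (i + 2) => {b ∈ I.B (i + 2) | ∃ c ∈ reachSet I (i + 1), (c, b) ∈ I.E (i + 1)}

/-- `B_{i,i+1}` contains a backward edge: an edge `(b, c) ∈ E i` with
`b ∈ B i \ C i` and `c ∈ C (i+1)`. -/
def BackwardAt {A : Type} (I : PathInstance A) (i : ℕ) : Prop :=
  1 ≤ i ∧ i + 1 ≤ I.len ∧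
  ∃ b c, (b, c) ∈ I.E i ∧ b ∈ I.B i ∧ b ∉ reachSet I i ∧ c ∈ reachSet I (i + 1)

/-- Adjacency in the graph `Conn(I_{[lo,hi]})`: its vertices are pairs `(i, a)`
with `a ∈ B i`, `lo ≤ i ≤ hi`, and `(i, a)` is adjacent to `(i+1, b)` whenever
`(a, b) ∈ E i`. -/
def connAdj {A : Type} (I : PathInstance A) (lo hi : ℕ) (p q : ℕ × A) : Prop :=
  lo ≤ p.1 ∧ p.1 + 1 ≤ hi ∧ q.1 = p.1 + 1 ∧
  p.2 ∈ I.B p.1 ∧ q.2 ∈ I.B q.1 ∧ (p.2, q.2) ∈ I.E p.1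

/-- `λ_{I,lo,hi}`: the pairs `(a, b) ∈ B lo × B hi` joined by an undirected path
in `Conn(I_{[lo,hi]})`. -/
def lamRel {A : Type} (I : PathInstance A) (lo hi : ℕ) : Set (A × A) :=
  {ab | ab.1 ∈ I.B lo ∧ ab.2 ∈ I.B hi ∧
    Relation.ReflTransGen (fun p q => connAdj I lo hi p q ∨ connAdj I lo hi q p)
      (lo, ab.1) (hi, ab.2)}

open Classical in
/-- The variable set `U` of the instance `I_λ`: the variables `1`, `len`, and
`i, i+1` for every index `i` such that `B_{i,i+1}` has a backward edge. -/
noncomputable def lamVars {A : Type} (I : PathInstance A) : Finset ℕ :=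
  (Finset.Icc 1 I.len).filter
    (fun v => v = 1 ∨ v = I.len ∨ BackwardAt I v ∨ (2 ≤ v ∧ BackwardAt I (v - 1)))

/-- The `t`-th smallest element of `U` (`1`-indexed). -/
noncomputable def lamEnum {A : Type} (I : PathInstance A) (t : ℕ) : ℕ :=
  ((lamVars I).sort (· ≤ ·)).getD (t - 1) 0

/-- The instance `I_λ`, presented as a path instance whose `t`-th variable is
the `t`-th smallest element of `U`: it consists of the subinstance of `I`
induced by `U`, where each gap between consecutive elements `u < w` of `U` with
`w > u + 1` is filled by the binary constraint `λ_{I,u,w}`. -/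
noncomputable def lamInst {A : Type} (I : PathInstance A) : PathInstance A where
  len := (lamVars I).card
  B := fun t => I.B (lamEnum I t)
  E := fun t =>
    if lamEnum I (t + 1) = lamEnum I t + 1 then I.E (lamEnum I t)
    else lamRel I (lamEnum I t) (lamEnum I (t + 1))

/-- Unpacking an `m`-tuple of elements of `V^k` into an `m*k`-tuple of
elements of `V`. -/
def unpackTuple {X : Type} {m k : ℕ} (σ : Fin m → Fin k → X) : Fin (m * k) → X :=
  fun t => σ t.divNat t.modNat

/-- Unpacking an `m`-ary relation on `A^k` into an `m*k`-ary relation on `A`. -/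
def unpackRel {A : Type} {m k : ℕ} (U : Set (Fin m → Fin k → A)) :
    Set (Fin (m * k) → A) :=
  {t | ∃ u ∈ U, ∀ i : Fin (m * k), t i = u i.divNat i.modNat}

/-- The instance `I` has pathwidth at most `p`. -/
def PathwidthLE {A V : Type} (I : Instance A V) (p : ℕ) : Prop :=
  ∃ (m : ℕ) (U : Fin m → Set V),
    (∀ v : V, ∃ i, v ∈ U i) ∧
    (∀ i, (U i).Finite ∧ (U i).ncard ≤ p + 1) ∧
    (∀ i j q : Fin m, i ≤ q → q ≤ j → ∀ v, v ∈ U i → v ∈ U j → v ∈ U q) ∧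
    (∀ c ∈ I.constraints, ∃ i, Set.range c.2.1 ⊆ U i)

/-- `𝔸` has pathwidth duality `p`: for every unsatisfiable instance `I` of
`CSP(𝔸)` there is an unsatisfiable instance `J` of `CSP(𝔸)` of pathwidth at
most `p` such that identifying some variables of `J` (along `h`) yields a
subinstance of `I`. -/
def HasPathwidthDuality {A : Type} (𝔸 : RelStruct A) (p : ℕ) : Prop :=
  ∀ (V : Type) (I : Instance A V), IsCSPInstance 𝔸 I → ¬I.Satisfiable →
    ∃ (W : Type) (J : Instance A W) (h : W → V),
      IsCSPInstance 𝔸 J ∧ ¬J.Satisfiable ∧ PathwidthLE J p ∧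
      ∀ c ∈ J.constraints,
        (⟨c.1, fun i => h (c.2.1 i), c.2.2⟩ :
          Σ n : ℕ, (Fin n → V) × Set (Fin n → A)) ∈ I.constraints

/-- The `k`-th bubble power `𝔸^(k)` of `𝔸`: the relational structure on `A^k`
whose basic relations are all unary relations definable as conjunctions of
basic relations of `𝔸` (with identification of variables and dummy variables,
but no existential quantification), and all binary relations
`E_ℐ = {(a, b) | ∀ (i,j) ∈ ℐ, a i = b j}` for `ℐ ⊆ [k]²`. -/
def bubblePower {A : Type} (𝔸 : RelStruct A) (k : ℕ) : RelStruct (Fin k → A) where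
  basic :=
    {r | (∃ L : Set (Σ n : ℕ, (Fin n → Fin k) × Set (Fin n → A)),
            (∀ c ∈ L, (⟨c.1, c.2.2⟩ : Σ n : ℕ, Set (Fin n → A)) ∈ 𝔸.basic) ∧
            r = ⟨1, {f : Fin 1 → (Fin k → A) |
                      ∀ c ∈ L, (fun i => f 0 (c.2.1 i)) ∈ c.2.2}⟩) ∨
         (∃ Idx : Set (Fin k × Fin k),
            r = ⟨2, {f : Fin 2 → (Fin k → A) | ∀ q ∈ Idx, f 0 q.1 = f 1 q.2}⟩)}

/-!
Soundness is preservation of solutions along derivations. For completeness, pathwidth duality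
yields an unsatisfiable instance of bounded pathwidth that maps to the given one; listing the
partial solutions on its bags turns it into an unsatisfiable path instance, whose binary relations
are invariant under the Hagemann–Mitschke operations, acting coordinatewise. So it suffices to
refute path instances with layers of bounded size by symmetric derivations of bounded width.

This is an induction on the size of the layers. Variables at which few values extend to a
consistent prefix and suffix are kept. On each stretch between them the instance is subdirect, and
there Ramsey's theorem turns many backward edges, that is, edges entering the reachable part from
outside, into a braid of walks, along which the Hagemann–Mitschke identities compose to a walk
leaving the reachable part. The number of backward edges is therefore bounded. Between consecutive
backward edges the undirected connectivity relations, which are symmetrically derivable because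
the stretch is subdirect, cannot leak into the reachable part, so they can replace the walks. The
stretch is thus bridged by a relation derivable in bounded width, and the bridged instance has
smaller layers. A derivation in it is simulated in the original one by deriving the needed
constraints next to the current relation and then running these derivations backwards.
-/

/-! ### Symmetric derivations -/

section SymmetricDerivations

variable {V A V' A' : Type*}

/-- A constraint on assignments `V → A` that only concerns the variables in `scope`. -/
structure LocalConstraint (V A : Type*) where
  scope : Finset V
  rel : Set (V → A)
  dependsOn : DependsOn (· ∈ rel) (scope : Set V)

/-- A set of local constraints, the abstract input of a symmetric derivation. -/
abbrev ConstraintSystem (V A : Type*) := Set (LocalConstraint V A)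

namespace ConstraintSystem

/-- The assignments that satisfy all constraints of `F` whose scope lies in `Z`. -/
def solutionsOn (F : ConstraintSystem V A) (Z : Finset V) : Set (V → A) :=
  {f | ∀ c ∈ F, c.scope ⊆ Z → f ∈ c.rel}

/-- A symmetric derivation step of width `r`: modulo the constraints on a set of at most `r`
variables, two relations on these variables coincide. This is the variable-level counterpart of a
rule that is consistent together with its mirror image. -/
def SymmStep (F : ConstraintSystem V A) (r : ℕ) (R S : Set (V → A)) : Prop :=
  ∃ Z : Finset V, Z.card ≤ r ∧ DependsOn (· ∈ R) (Z : Set V) ∧ DependsOn (· ∈ S) (Z : Set V) ∧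
    ∀ f ∈ F.solutionsOn Z, f ∈ R ↔ f ∈ S

/-- `R` and `S` are linked by a chain of symmetric derivation steps of width `r`. -/
def Interderivable (F : ConstraintSystem V A) (r : ℕ) : Set (V → A) → Set (V → A) → Prop :=
  Relation.ReflTransGen (F.SymmStep r)

/-- `R` is derivable from the trivial relation by symmetric steps of width `r`. -/
def Derivable (F : ConstraintSystem V A) (r : ℕ) (R : Set (V → A)) : Prop :=
  F.Interderivable r Set.univ R

end ConstraintSystem

theorem dependsOn_mem_inter {R S : Set (V → A)} {Z : Set V} (hR : DependsOn (· ∈ R) Z)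
    (hS : DependsOn (· ∈ S) Z) : DependsOn (· ∈ R ∩ S) Z :=
  fun _ _ h => congrArg₂ And (hR h) (hS h)

theorem dependsOn_mem_preimage {R : Set (V' → A')} {Z : Finset V'} [DecidableEq V]
    {Φ : (V → A) → V' → A'} {bag : V' → Finset V}
    (hΦ : ∀ i, DependsOn (fun f => Φ f i) (bag i : Set V)) (hR : DependsOn (· ∈ R) (Z : Set V')) :
    DependsOn (· ∈ Φ ⁻¹' R) (Z.biUnion bag : Set V) :=
  fun _ _ hfg => hR fun i hi => hΦ i fun v hv => hfg v
    (by simpa only [Finset.coe_biUnion] using Set.mem_biUnion hi hv)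

namespace ConstraintSystem

variable {F : ConstraintSystem V A} {r r' s : ℕ} {R S T : Set (V → A)} {Z : Finset V}

theorem Interderivable.symm (h : F.Interderivable r R S) : F.Interderivable r S R :=
  haveI : Std.Symm (F.SymmStep r) :=
    ⟨fun _ _ ⟨Z, hZ, hR, hS, h⟩ => ⟨Z, hZ, hS, hR, fun f hf => (h f hf).symm⟩⟩
  Relation.ReflTransGen.stdSymm.symm _ _ h

theorem Interderivable.trans (h : F.Interderivable r R S) (h' : F.Interderivable r S T) :
    F.Interderivable r R T :=
  Relation.ReflTransGen.trans h h'

theorem Interderivable.mono (h : F.Interderivable r R S) (hr : r ≤ s) :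
    F.Interderivable s R S :=
  Relation.ReflTransGen.mono (fun _ _ ⟨Z, hZ, hstep⟩ => ⟨Z, hZ.trans hr, hstep⟩) _ _ h

theorem Interderivable.inter (h : F.Interderivable r R S) (hT : DependsOn (· ∈ T) (Z : Set V))
    (hZ : Z.card ≤ s) : F.Interderivable (r + s) (T ∩ R) (T ∩ S) := by
  classical
  refine Relation.ReflTransGen.lift (T ∩ ·) ?_ _ _ h
  rintro R S ⟨Y, hY, hR, hS, heq⟩
  have hYZ : (Y : Set V) ⊆ (Y ∪ Z : Finset V) := by exact_mod_cast Finset.subset_union_left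
  have hT' := hT.mono (t := (Y ∪ Z : Finset V)) (by exact_mod_cast Finset.subset_union_right)
  refine ⟨Y ∪ Z, (Finset.card_union_le _ _).trans (by lia),
    dependsOn_mem_inter hT' (hR.mono hYZ), dependsOn_mem_inter hT' (hS.mono hYZ), ?_⟩
  exact fun f hf => and_congr_right fun _ =>
    heq f fun c hc hcY => hf c hc (hcY.trans Finset.subset_union_left)

theorem Derivable.mono (h : F.Derivable r R) (hr : r ≤ s) : F.Derivable s R :=
  Interderivable.mono h hr

theorem Derivable.interderivable_inter (h : F.Derivable r R) (hT : DependsOn (· ∈ T) (Z : Set V))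
    (hZ : Z.card ≤ s) : F.Interderivable (r + s) T (T ∩ R) := by
  simpa only [Set.inter_univ] using Interderivable.inter h hT hZ

theorem Derivable.of_subset (h : F.Derivable r R) (hRS : R ⊆ S)
    (hS : DependsOn (· ∈ S) (Z : Set V)) (hZ : Z.card ≤ s) : F.Derivable (r + s) S := by
  have hback := (h.interderivable_inter hS hZ).symm
  rw [Set.inter_eq_self_of_subset_right hRS] at hback
  exact (Interderivable.mono h (Nat.le_add_right r s)).trans hback

theorem Derivable.inter (hR : F.Derivable r R) (hS : F.Derivable r' S)
    (hZ : DependsOn (· ∈ R) (Z : Set V)) (hs : Z.card ≤ s) :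
    F.Derivable (max r (r' + s)) (R ∩ S) :=
  (Interderivable.mono hR (le_max_left _ _)).trans
    ((hS.interderivable_inter hZ hs).mono (le_max_right _ _))

theorem Derivable.of_solutionsOn_subset (hZ : Z.card ≤ r) (hS : DependsOn (· ∈ S) (Z : Set V))
    (h : F.solutionsOn Z ⊆ S) : F.Derivable r S :=
  .single ⟨Z, hZ, (dependsOn_const True).mono (Set.empty_subset _), hS,
    fun _ hf => iff_of_true trivial (h hf)⟩

theorem Interderivable.inter_sInter {G : Set (Set (V → A))} (hG : G.Finite)
    (hder : ∀ R ∈ G, F.Derivable r R) (hdep : ∀ R ∈ G, DependsOn (· ∈ R) (Z : Set V))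
    (hZ : Z.card ≤ s) (hT : DependsOn (· ∈ T) (Z : Set V)) :
    F.Interderivable (r + s) T (T ∩ ⋂₀ G) := by
  induction G, hG using Set.Finite.induction_on generalizing T with
  | empty => rw [Set.sInter_empty, Set.inter_univ]; exact .refl
  | @insert R G _ _ ih =>
    rw [Set.forall_mem_insert] at hder hdep
    rw [Set.sInter_insert, ← Set.inter_assoc]
    exact (hder.1.interderivable_inter hT hZ).trans
      (ih hder.2 hdep.2 (dependsOn_mem_inter hT hdep.1))

/-- The constraints of `F'` used in a step are derived one after another next to the current
relation and are removed again by running their derivations backwards. -/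
theorem Interderivable.preimage {F' : ConstraintSystem V' A'} (hF' : F'.Finite)
    {Φ : (V → A) → V' → A'} {bag : V' → Finset V} {k : ℕ} (hbag : ∀ i, (bag i).card ≤ k)
    (hΦ : ∀ i, DependsOn (fun f => Φ f i) (bag i : Set V))
    (hder : ∀ c ∈ F', F.Derivable r (Φ ⁻¹' c.rel)) {R S : Set (V' → A')}
    (h : F'.Interderivable s R S) : F.Interderivable (r + k * s) (Φ ⁻¹' R) (Φ ⁻¹' S) := by
  classical
  refine Relation.ReflTransGen.lift' (Φ ⁻¹' ·) ?_ _ _ h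
  rintro R S ⟨Y, hY, hR, hS, heq⟩
  have hcard : (Y.biUnion bag).card ≤ k * s :=
    (Finset.card_biUnion_le_card_mul _ _ k fun i _ => hbag i).trans (by nlinarith)
  let G : Set (Set (V → A)) := (fun c => Φ ⁻¹' c.rel) '' {c ∈ F' | c.scope ⊆ Y}
  have hsave {T : Set (V' → A')} (hT : DependsOn (· ∈ T) (Y : Set V')) :
      F.Interderivable (r + k * s) (Φ ⁻¹' T) (Φ ⁻¹' T ∩ ⋂₀ G) := by
    refine .inter_sInter ((hF'.subset (Set.sep_subset _ _)).image _) ?_ ?_ hcard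
      (dependsOn_mem_preimage hΦ hT)
    · rintro _ ⟨c, hc, rfl⟩
      exact hder c hc.1
    · rintro _ ⟨c, hc, rfl⟩
      exact dependsOn_mem_preimage hΦ (c.dependsOn.mono (by exact_mod_cast hc.2))
  have hinter : Φ ⁻¹' R ∩ ⋂₀ G = Φ ⁻¹' S ∩ ⋂₀ G := by
    ext f
    refine and_congr_left fun hf => heq (Φ f) fun c hc hcY => ?_
    exact hf _ (Set.mem_image_of_mem _ ⟨hc, hcY⟩)
  exact (hsave hR).trans (hinter ▸ (hsave hS).symm)

end ConstraintSystem

end SymmetricDerivations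

/-! ### Ramsey's theorem for pairs -/

section Ramsey

variable {α : Type*} [LinearOrder α] (κ : Type*) [Finite κ] (m : ℕ)

theorem exists_endHomogeneous_subset : ∃ N : ℕ, ∀ (c : α → α → κ) (S : Finset α), N ≤ S.card →
    ∃ T ⊆ S, T.card = m ∧ ∃ g : α → κ, ∀ a ∈ T, ∀ b ∈ T, a < b → c a b = g a := by
  classical
  have := Fintype.ofFinite κ
  induction m with
  | zero => exact ⟨1, fun c S _ => ⟨∅, by simp, by simp, fun a => c a a, by simp⟩⟩
  | succ m ih =>
    obtain ⟨N, hN⟩ := ih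
    refine ⟨Fintype.card κ * N + 2, fun c S hS => ?_⟩
    have hne : S.Nonempty := Finset.card_pos.1 (by lia)
    set a := S.min' hne
    have haS : a ∈ S := S.min'_mem hne
    obtain ⟨y, -, hy⟩ := Finset.exists_lt_card_fiber_of_mul_lt_card_of_maps_to
      (s := S.erase a) (t := Finset.univ) (f := c a) (n := N) (fun _ _ => Finset.mem_univ _)
      (by rw [Finset.card_univ, Finset.card_erase_of_mem haS]; lia)
    obtain ⟨T, hTS, hTm, g, hg⟩ := hN c _ hy.le
    have hT {b : α} (hb : b ∈ T) : a < b ∧ b ∈ S ∧ c a b = y := by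
      obtain ⟨hbS, hby⟩ := Finset.mem_filter.1 (hTS hb)
      exact ⟨S.min'_lt_of_mem_erase_min' hne hbS, Finset.mem_of_mem_erase hbS, hby⟩
    have haT : a ∉ T := fun h => (hT h).1.false
    refine ⟨insert a T, Finset.insert_subset haS fun b hb => (hT hb).2.1,
      by rw [Finset.card_insert_of_notMem haT, hTm], Function.update g a y, ?_⟩
    intro u hu v hv huv
    obtain rfl | hvT := Finset.mem_insert.1 hv
    · obtain rfl | huT := Finset.mem_insert.1 hu
      · exact absurd huv (lt_irrefl _)
      · exact absurd huv (hT huT).1.not_gt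
    · obtain rfl | huT := Finset.mem_insert.1 hu
      · rw [Function.update_self, (hT hvT).2.2]
      · rw [Function.update_of_ne (hT huT).1.ne', hg u huT v hvT huv]

theorem exists_monochromatic_subset : ∃ N : ℕ, ∀ (c : α → α → κ) (S : Finset α), N ≤ S.card →
    ∃ T ⊆ S, T.card = m ∧ ∃ y : κ, ∀ a ∈ T, ∀ b ∈ T, a < b → c a b = y := by
  classical
  have := Fintype.ofFinite κ
  obtain ⟨N, hN⟩ := exists_endHomogeneous_subset (α := α) κ (Fintype.card κ * m + 1)
  refine ⟨N, fun c S hS => ?_⟩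
  obtain ⟨T, hTS, hTcard, g, hg⟩ := hN c S hS
  obtain ⟨y, -, hy⟩ := Finset.exists_lt_card_fiber_of_mul_lt_card_of_maps_to
    (s := T) (t := Finset.univ) (f := g) (n := m) (fun _ _ => Finset.mem_univ _)
    (by rw [Finset.card_univ]; lia)
  obtain ⟨T', hT', hcard⟩ := Finset.exists_subset_card_eq hy.le
  have hT'T {a : α} (ha : a ∈ T') : a ∈ T ∧ g a = y := Finset.mem_filter.1 (hT' ha)
  refine ⟨T', fun a ha => hTS (hT'T ha).1, hcard, y, fun a ha b hb hab => ?_⟩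
  rw [hg a (hT'T ha).1 b (hT'T hb).1 hab, (hT'T ha).2]

theorem exists_monochromatic_sequence : ∃ N : ℕ, ∀ (c : ℕ → ℕ → κ) (S : Finset ℕ), N ≤ S.card →
    ∃ (h : ℕ → ℕ) (y : κ), (∀ i < m, h i ∈ S) ∧ StrictMonoOn h (Set.Iio m) ∧
      ∀ i j, i < j → j < m → c (h i) (h j) = y := by
  obtain ⟨N, hN⟩ := exists_monochromatic_subset (α := ℕ) κ m
  refine ⟨N, fun c S hS => ?_⟩
  obtain ⟨T, hTS, hTm, y, hy⟩ := hN c S hS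
  have hT : (Set.ofPred (· ∈ T)).Finite := T.finite_toSet
  have hcard : hT.toFinset.card = m := by
    rw [← hTm]
    exact congrArg Finset.card (Finset.ext fun i => hT.mem_toFinset)
  have hmem : ∀ i < m, Nat.nth (· ∈ T) i ∈ T := fun i hi =>
    Nat.nth_mem_of_lt_card hT (hcard.symm ▸ hi)
  have hmono : StrictMonoOn (Nat.nth (· ∈ T)) (Set.Iio m) := hcard ▸ Nat.nth_strictMonoOn hT
  exact ⟨Nat.nth (· ∈ T), y, fun i hi => hTS (hmem i hi), hmono, fun i j hij hj =>
    hy _ (hmem i (hij.trans hj)) _ (hmem j hj) (hmono (hij.trans hj) hj hij)⟩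

end Ramsey

/-! ### Walks in layered graphs -/

open scoped SetRel

section LayeredWalks

variable {X : Type*}

/-- `s` follows the edges of the layered graph `E`, in which `E i` joins layer `i` to layer
`i + 1`, from layer `u` to layer `v`. -/
def IsWalk (E : ℕ → SetRel X X) (u v : ℕ) (s : ℕ → X) : Prop :=
  ∀ i, u ≤ i → i < v → (s i, s (i + 1)) ∈ E i

/-- The pairs of vertices in the layers `u` and `v` that are joined by a directed walk. -/
def walkRel (E : ℕ → SetRel X X) (u v : ℕ) : SetRel X X :=
  {x | ∃ s, s u = x.1 ∧ s v = x.2 ∧ IsWalk E u v s}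

/-- The vertices of layer `v` that are reachable from layer `0`; the sets `C_v` of the paper. -/
def reach (E : ℕ → SetRel X X) (v : ℕ) : Set X := (walkRel E 0 v).cod

/-- Layer `e` has a backward edge: an edge that enters the reachable part from outside. -/
def IsBackward (E : ℕ → SetRel X X) (e : ℕ) : Prop :=
  ∃ x ∈ E e, x.1 ∉ reach E e ∧ x.2 ∈ reach E (e + 1)

open Classical in
/-- The layers in `[l, r)` that have a backward edge. -/
noncomputable def backwardEdges (E : ℕ → SetRel X X) (l r : ℕ) : Finset ℕ :=
  (Finset.Ico l r).filter (IsBackward E)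

/-- Between the layers `l` and `r`, every edge relation is subdirect in the layers `B`. -/
def IsSubdirect (B : ℕ → Set X) (E : ℕ → SetRel X X) (l r : ℕ) : Prop :=
  ∀ i, l ≤ i → i < r → (E i).dom = B i ∧ (E i).cod = B (i + 1)

variable {B : ℕ → Set X} {E : ℕ → SetRel X X} {l r u v w i : ℕ} {a b : X} {s t : ℕ → X}

theorem IsWalk.mono (hs : IsWalk E u w s) (hl : u ≤ l) (hr : r ≤ w) : IsWalk E l r s :=
  fun i hi hi' => hs i (hl.trans hi) (hi'.trans_le hr)

theorem IsWalk.mem_walkRel (hs : IsWalk E u v s) : (s u, s v) ∈ walkRel E u v :=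
  ⟨s, rfl, rfl, hs⟩

theorem IsWalk.exists_glue (hs : IsWalk E u v s) (ht : IsWalk E v w t) (h : s v = t v) :
    ∃ x, IsWalk E u w x ∧ (∀ i ≤ v, x i = s i) ∧ ∀ i, v ≤ i → x i = t i := by
  refine ⟨fun i => if i ≤ v then s i else t i, fun i hi hi' => ?_, fun i hi => if_pos hi,
    fun i hi => ?_⟩
  · rcases lt_trichotomy i v with hiv | rfl | hiv
    · simpa only [hiv.le, Nat.succ_le_of_lt hiv, if_true] using hs i hi hiv
    · simpa only [le_refl, if_true, Nat.not_succ_le_self, if_false, h] using ht i le_rfl hi'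
    · simpa only [hiv.not_ge, (hiv.trans i.lt_succ_self).not_ge, if_false] using ht i hiv.le hi'
  · rcases hi.eq_or_lt with rfl | hi
    · exact (if_pos le_rfl).trans h
    · exact if_neg hi.not_ge

@[simp]
theorem walkRel_self (E : ℕ → SetRel X X) (u : ℕ) : walkRel E u u = SetRel.id := by
  ext ⟨a, b⟩
  constructor
  · rintro ⟨s, rfl, rfl, -⟩
    rfl
  · rintro rfl
    exact ⟨fun _ => a, rfl, rfl, fun i hi hi' => absurd hi hi'.not_ge⟩

@[simp]
theorem walkRel_succ_self (E : ℕ → SetRel X X) (u : ℕ) : walkRel E u (u + 1) = E u := by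
  ext ⟨a, b⟩
  constructor
  · rintro ⟨s, rfl, rfl, hs⟩
    exact hs u le_rfl u.lt_succ_self
  · intro hab
    refine ⟨fun i => if i ≤ u then a else b, by simp, by simp, fun i hi hi' => ?_⟩
    obtain rfl : i = u := by lia
    simpa using hab

theorem walkRel_comp_walkRel (huv : u ≤ v) (hvw : v ≤ w) :
    walkRel E u v ○ walkRel E v w = walkRel E u w := by
  ext ⟨a, b⟩
  constructor
  · rintro ⟨c, ⟨s, rfl, rfl, hs⟩, t, hst, rfl, ht⟩
    obtain ⟨x, hx, hxs, hxt⟩ := hs.exists_glue ht hst.symm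
    exact ⟨x, hxs u huv, hxt w hvw, hx⟩
  · rintro ⟨s, rfl, rfl, hs⟩
    exact ⟨s v, (hs.mono le_rfl hvw).mem_walkRel, (hs.mono huv le_rfl).mem_walkRel⟩

theorem walkRel_succ (huv : u ≤ v) : walkRel E u (v + 1) = walkRel E u v ○ E v := by
  rw [← walkRel_comp_walkRel huv v.le_succ, walkRel_succ_self]

@[simp]
theorem reach_zero (E : ℕ → SetRel X X) : reach E 0 = Set.univ := by
  simp [reach, SetRel.cod]

theorem mem_reach_of_mem_walkRel (huv : u ≤ v) (hab : (a, b) ∈ walkRel E u v)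
    (ha : a ∈ reach E u) : b ∈ reach E v := by
  obtain ⟨c, hc⟩ := ha
  exact ⟨c, walkRel_comp_walkRel u.zero_le huv ▸ ⟨a, hc, hab⟩⟩

theorem mem_reach_succ : b ∈ reach E (v + 1) ↔ ∃ a ∈ reach E v, (a, b) ∈ E v := by
  rw [reach, walkRel_succ v.zero_le]
  exact ⟨fun ⟨c, a, hca, hab⟩ => ⟨a, ⟨c, hca⟩, hab⟩, fun ⟨a, ⟨c, hca⟩, hab⟩ => ⟨c, a, hca, hab⟩⟩

theorem mem_reach_of_mem_walkRel_of_not_isBackward (huv : u ≤ v)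
    (hE : ∀ e, u ≤ e → e < v → ¬IsBackward E e) (hab : (a, b) ∈ walkRel E u v)
    (hb : b ∈ reach E v) : a ∈ reach E u := by
  induction v, huv using Nat.le_induction generalizing b with
  | base =>
    obtain rfl : a = b := by simpa using hab
    exact hb
  | succ v huv ih =>
    rw [walkRel_succ huv] at hab
    obtain ⟨c, hac, hcb⟩ := hab
    refine ih (fun e hue hev => hE e hue (hev.trans v.lt_succ_self)) hac ?_
    by_contra hc
    exact hE v huv v.lt_succ_self ⟨(c, b), hcb, hc, hb⟩

theorem mem_backwardEdges {e : ℕ} : e ∈ backwardEdges E l r ↔ (l ≤ e ∧ e < r) ∧ IsBackward E e := by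
  simp only [backwardEdges, Finset.mem_filter, Finset.mem_Ico]

namespace IsSubdirect

theorem mono (h : IsSubdirect B E l r) (hu : l ≤ u) (hv : v ≤ r) : IsSubdirect B E u v :=
  fun i hi hi' => h i (hu.trans hi) (hi'.trans_le hv)

theorem exists_walk_to (h : IsSubdirect B E u v) (huv : u ≤ v) (hb : b ∈ B v) :
    ∃ a ∈ B u, (a, b) ∈ walkRel E u v := by
  induction v, huv using Nat.le_induction generalizing b with
  | base => exact ⟨b, hb, by simp⟩
  | succ v huv ih =>
    obtain ⟨hdom, hcod⟩ := h v huv v.lt_succ_self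
    obtain ⟨c, hcb⟩ := hcod.superset hb
    obtain ⟨a, ha, hac⟩ := ih (h.mono le_rfl v.le_succ) (hdom.subset ⟨b, hcb⟩)
    exact ⟨a, ha, walkRel_succ huv ▸ ⟨c, hac, hcb⟩⟩

theorem exists_walk_from (h : IsSubdirect B E u v) (huv : u ≤ v) (ha : a ∈ B u) :
    ∃ b ∈ B v, (a, b) ∈ walkRel E u v := by
  induction v, huv using Nat.le_induction with
  | base => exact ⟨a, ha, by simp⟩
  | succ v huv ih =>
    obtain ⟨hdom, hcod⟩ := h v huv v.lt_succ_self
    obtain ⟨c, hc, hac⟩ := ih (h.mono le_rfl v.le_succ)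
    obtain ⟨b, hcb⟩ := hdom.superset hc
    exact ⟨b, hcod.subset ⟨c, hcb⟩, walkRel_succ huv ▸ ⟨c, hac, hcb⟩⟩

theorem exists_isWalk_through {e : ℕ} (h : IsSubdirect B E l r) (hl : l ≤ e) (hr : e < r)
    (hab : (a, b) ∈ E e) : ∃ s, IsWalk E l r s ∧ s e = a ∧ s (e + 1) = b := by
  obtain ⟨hdom, hcod⟩ := h e hl hr
  obtain ⟨_, -, s, -, hse, hs⟩ := (h.mono le_rfl hr.le).exists_walk_to hl (hdom.subset ⟨b, hab⟩)
  obtain ⟨_, -, t, hte, -, ht⟩ := (h.mono (hl.trans e.le_succ) le_rfl).exists_walk_from hr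
    (hcod.subset ⟨a, hab⟩)
  obtain ⟨m, hme, hme', hm⟩ := (walkRel_succ_self E e).symm ▸ hab
  obtain ⟨x, hx, hxs, hxm⟩ := hs.exists_glue hm (hse.trans hme.symm)
  obtain ⟨y, hy, hyx, -⟩ := hx.exists_glue ht ((hxm _ e.le_succ).trans (hme'.trans hte.symm))
  exact ⟨y, hy, by rw [hyx e e.le_succ, hxs e le_rfl, hse],
    by rw [hyx _ le_rfl, hxm _ e.le_succ, hme']⟩

theorem mem_of_isWalk (h : IsSubdirect B E l r) (hs : IsWalk E l r s) (hl : l ≤ i) (hr : i < r) :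
    s i ∈ B i :=
  (h i hl hr).1.subset ⟨_, hs i hl hr⟩

end IsSubdirect

end LayeredWalks

/-! ### Hagemann–Mitschke terms bound the number of backward edges -/

section HagemannMitschke

variable {X : Type} {E : ℕ → SetRel X X} {n : ℕ}

theorem Pres3Rel.comp {p : X → X → X → X} {S T : SetRel X X} (hS : Pres3Rel p S)
    (hT : Pres3Rel p T) : Pres3Rel p (S ○ T) := by
  rintro x y z ⟨a, ha, ha'⟩ ⟨b, hb, hb'⟩ ⟨c, hc, hc'⟩
  exact ⟨p a b c, hS _ _ _ ha hb hc, hT _ _ _ ha' hb' hc'⟩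

theorem Pres3Rel.walkRel {p : X → X → X → X} (hE : ∀ i, Pres3Rel p (E i)) (u v : ℕ) :
    Pres3Rel p (walkRel E u v) := by
  rintro ⟨_, _⟩ ⟨_, _⟩ ⟨_, _⟩ ⟨x, rfl, rfl, hx⟩ ⟨y, rfl, rfl, hy⟩ ⟨z, rfl, rfl, hz⟩
  exact ⟨fun i => p (x i) (y i) (z i), rfl, rfl, fun i hi hi' =>
    hE i _ _ _ (hx i hi hi') (hy i hi hi') (hz i hi hi')⟩

/-- The walks `p k (g k) (g (k + 1)) (g (k + 2))` between the layers `y k` and `y (k + 1)` fit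
together, because at `y (k + 1)` the identity `p k x x z = p (k + 1) x z z` applies. -/
theorem IsHMChain.mem_walkRel_of_braid {p : ℕ → X → X → X → X} (hp : IsHMChain n p)
    (hE : ∀ k ≤ n, ∀ i, Pres3Rel (p k) (E i)) {g : ℕ → ℕ → X} {y : ℕ → ℕ}
    (hy : ∀ k ≤ n, y k ≤ y (k + 1)) (hg : ∀ k ≤ n + 2, IsWalk E (y 0) (y (n + 1)) (g k))
    (hleft : ∀ k < n, g k (y (k + 1)) = g (k + 1) (y (k + 1)))
    (hright : ∀ k < n, g (k + 2) (y (k + 1)) = g (k + 3) (y (k + 1))) :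
    (g 0 (y 0), g (n + 2) (y (n + 1))) ∈ walkRel E (y 0) (y (n + 1)) := by
  obtain ⟨-, hfirst, hlast, hchain⟩ := hp
  let q (k i : ℕ) : X := p k (g k i) (g (k + 1) i) (g (k + 2) i)
  have hymono : MonotoneOn y (Set.Iic (n + 1)) := by
    refine monotoneOn_of_le_succ Set.ordConnected_Iic fun k _ _ hk => hy k ?_
    exact Nat.succ_le_succ_iff.1 hk
  have hsegment (k : ℕ) (hk : k ≤ n) :
      (q k (y k), q k (y (k + 1))) ∈ walkRel E (y k) (y (k + 1)) := by
    have hgk (j : ℕ) (hj : j ≤ n + 2) : (g j (y k), g j (y (k + 1))) ∈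
        walkRel E (y k) (y (k + 1)) :=
      ((hg j hj).mono (hymono (by simp) (Set.mem_Iic.2 (by lia)) k.zero_le)
        (hymono (Set.mem_Iic.2 (by lia)) (by simp) (by lia))).mem_walkRel
    exact Pres3Rel.walkRel (hE k hk) _ _ _ _ _ (hgk k (by lia)) (hgk (k + 1) (by lia))
      (hgk (k + 2) (by lia))
  have hjoin (k : ℕ) (hk : k < n) : q k (y (k + 1)) = q (k + 1) (y (k + 1)) := by
    simp only [q, ← hleft k hk, ← hright k hk, hchain k hk]
  have hprefix (k : ℕ) (hk : k ≤ n) : (q 0 (y 0), q k (y (k + 1))) ∈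
      walkRel E (y 0) (y (k + 1)) := by
    induction k with
    | zero => exact hsegment 0 hk
    | succ k ih =>
      rw [← walkRel_comp_walkRel (hymono (by simp) (Set.mem_Iic.2 (by lia)) k.succ.zero_le)
        (hy (k + 1) hk)]
      exact ⟨_, ih (by lia), hjoin k hk ▸ hsegment (k + 1) hk⟩
  simpa only [q, hfirst, hlast] using hprefix n le_rfl

theorem exists_injOn_fin {α : Type*} {s : Set α} {D : ℕ} (h : s.encard ≤ D) :
    ∃ ι : α → Fin (D + 1), Set.InjOn ι s := by
  have huniv : s.encard ≤ (Set.univ : Set (Fin (D + 1))).encard := by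
    rw [Set.encard_univ, ENat.card_eq_coe_fintype_card, Fintype.card_fin]
    exact h.trans (by exact_mod_cast D.le_succ)
  obtain ⟨ι, -, hι⟩ := (Set.finite_of_encard_le_coe h).exists_injOn_of_encard_le huniv
  exact ⟨ι, hι⟩

theorem exists_homogeneous_sequence (D m : ℕ) : ∃ N : ℕ, ∀ {α : Type*} {B : ℕ → Set α}
    {f : ℕ → ℕ → α} {S : Finset ℕ}, (∀ i, (B i).encard ≤ D) → (∀ a ∈ S, ∀ b ∈ S, f a b ∈ B b) →
    N ≤ S.card → ∃ h : ℕ → ℕ, (∀ i < m, h i ∈ S) ∧ StrictMonoOn h (Set.Iio m) ∧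
      (∀ i j k, k < i → k < j → i < m → j < m → f (h i) (h k) = f (h j) (h k)) ∧
      ∀ i j k, i < k → j < k → k < m → f (h i) (h k) = f (h j) (h k) := by
  obtain ⟨N, hN⟩ := exists_monochromatic_sequence (Fin (D + 1) × Fin (D + 1)) m
  refine ⟨N, fun {α B f S} hB hf hS => ?_⟩
  choose ι hι using fun i => exists_injOn_fin (hB i)
  obtain ⟨h, y, hS, hmono, hcol⟩ := hN (fun a b => (ι a (f b a), ι b (f a b))) S hS
  simp only [Prod.ext_iff] at hcol
  refine ⟨h, hS, hmono, fun i j k hki hkj hi hj => ?_, fun i j k hik hjk hk => ?_⟩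
  · have hk := hS k (hki.trans hi)
    exact hι (h k) (hf _ (hS i hi) _ hk) (hf _ (hS j hj) _ hk)
      ((hcol k i hki hi).1.trans (hcol k j hkj hj).1.symm)
  · have hk' := hS k hk
    exact hι (h k) (hf _ (hS i (hik.trans hk)) _ hk') (hf _ (hS j (hjk.trans hk)) _ hk')
      ((hcol i k hik hk).2.trans (hcol j k hjk hk).2.symm)

theorem IsSubdirect.exists_isWalk_of_mem_backwardEdges {B : ℕ → Set X} {l r e : ℕ}
    (h : IsSubdirect B E l r) (he : e ∈ backwardEdges E l r) :
    ∃ s, IsWalk E l r s ∧ s e ∉ reach E e ∧ s (e + 1) ∈ reach E (e + 1) := by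
  obtain ⟨⟨hl, hr⟩, ⟨a, b⟩, hab, ha, hb⟩ := mem_backwardEdges.1 he
  obtain ⟨s, hs, rfl, rfl⟩ := h.exists_isWalk_through hl hr hab
  exact ⟨s, hs, ha, hb⟩

/-- With many backward edges, Ramsey's theorem yields a braid of walks through them in which the
first walk is inside the reachable part and the last one outside, contradicting the
Hagemann–Mitschke identities. -/
theorem exists_card_backwardEdges_le (n D : ℕ) : ∃ N : ℕ, ∀ {X : Type}
    {p : ℕ → X → X → X → X} {B : ℕ → Set X} {E : ℕ → SetRel X X} {l r : ℕ}, IsHMChain n p →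
    (∀ k ≤ n, ∀ i, Pres3Rel (p k) (E i)) → (∀ i, (B i).encard ≤ D) → IsSubdirect B E l r →
    (backwardEdges E l r).card ≤ N := by
  obtain ⟨N, hN⟩ := exists_homogeneous_sequence D (2 * n + 6)
  refine ⟨N, fun {X p B E l r} hp hpres hB hsub => ?_⟩
  by_contra! hcard
  have hne : Nonempty (ℕ → X) := by
    obtain ⟨e, he⟩ := Finset.card_pos.1 (N.zero_le.trans_lt hcard)
    exact ⟨(hsub.exists_isWalk_of_mem_backwardEdges he).choose⟩
  choose! f hf hout hin using fun e => hsub.exists_isWalk_of_mem_backwardEdges (e := e)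
  have hbounds {e : ℕ} (he : e ∈ backwardEdges E l r) : l ≤ e ∧ e < r := (mem_backwardEdges.1 he).1
  obtain ⟨h, hh, hmono, hafter, hbefore⟩ := hN hB (fun a ha b hb =>
    hsub.mem_of_isWalk (hf a ha) (hbounds hb).1 (hbounds hb).2) hcard.le
  have hle {i j : ℕ} (hij : i ≤ j) (hj : j < 2 * n + 6) : h i ≤ h j :=
    hmono.monotoneOn (hij.trans_lt hj) hj hij
  have hwalk {j u v : ℕ} (hj : j < 2 * n + 6) (hu : l ≤ u) (hv : v < 2 * n + 6) :
      IsWalk E u (h v) (f (h j)) :=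
    (hf _ (hh j hj)).mono hu (hbounds (hh v hv)).2.le
  have hbraid := hp.mem_walkRel_of_braid hpres (g := fun k => f (h (2 * k + 1)))
    (y := fun k => h (2 * (k + 1))) (fun k hk => hle (by lia) (by lia))
    (fun k hk => hwalk (by lia) (hbounds (hh _ (by lia))).1 (by lia))
    (fun k hk => hbefore _ _ _ (by lia) (by lia) (by lia))
    (fun k hk => hafter _ _ _ (by lia) (by lia) (by lia) (by lia))
  have hstart : f (h 1) (h 2) ∈ reach E (h 2) :=
    mem_reach_of_mem_walkRel (hmono (Set.mem_Iio.2 (by lia)) (Set.mem_Iio.2 (by lia)) one_lt_two)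
      (hwalk (by lia) ((hbounds (hh 1 (by lia))).1.trans (Nat.le_succ _)) (by lia)).mem_walkRel
      (hin _ (hh 1 (by lia)))
  have hend := mem_reach_of_mem_walkRel (hle (by lia) (by lia)) hbraid hstart
  exact hout _ (hh (2 * (n + 2) + 1) (by lia)) (mem_reach_of_mem_walkRel (hle (by lia) (by lia))
    (hwalk (by lia) (hbounds (hh _ (by lia))).1 (by lia)).mem_walkRel hend)

end HagemannMitschke

/-! ### Connectivity relations of subdirect stretches -/

section Connectivity

/-- The assignments under which the variables `u` and `v` are related by `T`. -/
def relAt {V X : Type*} (u v : V) (T : SetRel X X) : Set (V → X) := {s | (s u, s v) ∈ T}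

theorem dependsOn_relAt {V X : Type*} [DecidableEq V] (u v : V) (T : SetRel X X) :
    DependsOn (· ∈ relAt u v T) (({u, v} : Finset V) : Set V) :=
  fun s t h => by simp only [relAt, Set.mem_ofPred_eq, h u (by simp), h v (by simp)]

/-- The relation `T` on consecutive variables `i` and `i + 1`. -/
def edgeConstraint {X : Type*} (i : ℕ) (T : SetRel X X) : LocalConstraint ℕ X where
  scope := {i, i + 1}
  rel := relAt i (i + 1) T
  dependsOn := dependsOn_relAt i (i + 1) T

/-- The path instance on the variables `0, …, L` with binary constraints `E 0, …, E (L - 1)`. -/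
def pathSystem {X : Type*} (L : ℕ) (E : ℕ → SetRel X X) : ConstraintSystem ℕ X :=
  (fun i => edgeConstraint i (E i)) '' Set.Iio L

/-- The equivalence (on the domain of `σ`) generated by sharing a `σ`-successor. -/
def zigzagClosure {X : Type*} (σ : SetRel X X) : SetRel X X :=
  {x | Relation.ReflTransGen (fun a b => (a, b) ∈ σ ○ σ.inv) x.1 x.2}

/-- Connectedness by undirected walks: for `i = v` and a subdirect stretch this is the relation
`λ` of the paper. For `u ≤ i ≤ v` the zigzags still range over the whole stretch `[u, v]`. -/
def connRel {X : Type*} (E : ℕ → SetRel X X) (u v i : ℕ) : SetRel X X :=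
  zigzagClosure (walkRel E u v) ○ walkRel E u i

theorem solutionsOn_pathSystem_subset {X : Type*} {L i : ℕ} {E : ℕ → SetRel X X} (hi : i < L)
    {Z : Finset ℕ} (hZ : {i, i + 1} ⊆ Z) :
    (pathSystem L E).solutionsOn Z ⊆ relAt i (i + 1) (E i) :=
  fun _ hs => hs _ (Set.mem_image_of_mem _ hi) hZ

theorem pathSystem_finite {X : Type*} (L : ℕ) (E : ℕ → SetRel X X) : (pathSystem L E).Finite :=
  (Set.finite_Iio L).image _

theorem derivable_connRel {X : Type*} {L u v i : ℕ} {B : ℕ → Set X} {E : ℕ → SetRel X X}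
    (hsub : IsSubdirect B E u v) (hv : v ≤ L) (hui : u ≤ i) (hiv : i ≤ v) :
    (pathSystem L E).Derivable 3 (relAt u i (connRel E u v i)) := by
  induction i, hui using Nat.le_induction with
  | base =>
    have htop : relAt u u (connRel E u v u) = Set.univ :=
      Set.eq_univ_of_forall fun s => ⟨s u, .refl, by simp⟩
    exact htop ▸ .refl
  | succ i hui ih =>
    refine Relation.ReflTransGen.tail (ih (by lia)) ⟨{u, i, i + 1}, Finset.card_le_three,
      (dependsOn_relAt _ _ _).mono ?_, (dependsOn_relAt _ _ _).mono ?_, fun s hs => ?_⟩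
    · simp [Set.insert_subset_iff]
    · simp [Set.insert_subset_iff]
    have hedge : (s i, s (i + 1)) ∈ E i :=
      solutionsOn_pathSystem_subset (by lia) (Finset.subset_insert _ _) hs
    constructor
    · rintro ⟨c, hzig, hwalk⟩
      exact ⟨c, hzig, walkRel_succ hui ▸ ⟨s i, hwalk, hedge⟩⟩
    · rintro ⟨c, hzig, hwalk⟩
      obtain ⟨hdom, hcod⟩ := hsub i hui hiv
      obtain ⟨a, -, ha⟩ := (hsub.mono le_rfl (i.le_succ.trans hiv)).exists_walk_to hui
        (hdom.subset ⟨_, hedge⟩)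
      obtain ⟨z, -, hz⟩ := (hsub.mono (hui.trans i.le_succ) le_rfl).exists_walk_from hiv
        (hcod.subset ⟨_, hedge⟩)
      have hui' := hui.trans i.le_succ
      have hcz : (c, z) ∈ walkRel E u v := walkRel_comp_walkRel hui' hiv ▸ ⟨_, hwalk, hz⟩
      have haz : (a, z) ∈ walkRel E u v :=
        walkRel_comp_walkRel hui' hiv ▸ ⟨_, walkRel_succ hui ▸ ⟨_, ha, hedge⟩, hz⟩
      exact ⟨a, Relation.ReflTransGen.tail hzig ⟨z, hcz, haz⟩, ha⟩

theorem mem_reach_of_mem_connRel {X : Type*} {u v : ℕ} {E : ℕ → SetRel X X} (huv : u ≤ v)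
    (hE : ∀ e, u ≤ e → e < v → ¬IsBackward E e) {a b : X} (hab : (a, b) ∈ connRel E u v v)
    (ha : a ∈ reach E u) : b ∈ reach E v := by
  obtain ⟨c, hac, hcb⟩ := hab
  refine mem_reach_of_mem_walkRel huv hcb ?_
  replace hac : Relation.ReflTransGen _ a c := hac
  clear hcb
  induction hac with
  | refl => exact ha
  | tail _ hxy ih =>
    obtain ⟨z, hxz, hyz⟩ := hxy
    exact mem_reach_of_mem_walkRel_of_not_isBackward huv hE hyz
      (mem_reach_of_mem_walkRel huv hxz ih)

end Connectivity

section Preservation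

variable {X : Type} {p : X → X → X → X} {σ : SetRel X X}

theorem Pres3Rel.inv (hσ : Pres3Rel p σ) : Pres3Rel p σ.inv :=
  fun _ _ _ ha hb hc => hσ _ _ _ ha hb hc

/-- Zigzags are moved in one coordinate at a time, the others being kept fixed by trivial
zigzags, which exist in the domain of `σ` only. -/
theorem Pres3Rel.zigzagClosure_comp {τ : SetRel X X} (hσ : Pres3Rel p σ) (hτ : Pres3Rel p τ)
    (hdom : τ.dom ⊆ σ.dom) : Pres3Rel p (zigzagClosure σ ○ τ) := by
  have hzig := hσ.comp hσ.inv
  have hrefl {x : X} (hx : x ∈ σ.dom) : (x, x) ∈ σ ○ σ.inv := by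
    obtain ⟨z, hz⟩ := hx
    exact ⟨z, hz, hz⟩
  have hstart {x y : X} (hxy : (x, y) ∈ zigzagClosure σ) (hy : y ∈ σ.dom) : x ∈ σ.dom := by
    change Relation.ReflTransGen _ x y at hxy
    obtain rfl | ⟨_, ⟨z, hz, -⟩, -⟩ := Relation.ReflTransGen.cases_head hxy
    exacts [hy, ⟨z, hz⟩]
  rintro ⟨x, _⟩ ⟨y, _⟩ ⟨z, _⟩ ⟨x', hx, hx'⟩ ⟨y', hy, hy'⟩ ⟨z', hz, hz'⟩
  have hyσ := hrefl (hstart hy (hdom ⟨_, hy'⟩))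
  have hzσ := hrefl (hstart hz (hdom ⟨_, hz'⟩))
  have hxσ' := hrefl (hdom ⟨_, hx'⟩)
  have hyσ' := hrefl (hdom ⟨_, hy'⟩)
  refine ⟨p x' y' z', ?_, hτ _ _ _ hx' hy' hz'⟩
  have move_x : (p x y z, p x' y z) ∈ zigzagClosure σ :=
    Relation.ReflTransGen.lift (p · y z) (fun _ _ h => hzig _ _ _ h hyσ hzσ) _ _ hx
  have move_y : (p x' y z, p x' y' z) ∈ zigzagClosure σ :=
    Relation.ReflTransGen.lift (p x' · z) (fun _ _ h => hzig _ _ _ hxσ' h hzσ) _ _ hy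
  have move_z : (p x' y' z, p x' y' z') ∈ zigzagClosure σ :=
    Relation.ReflTransGen.lift (p x' y' ·) (fun _ _ h => hzig _ _ _ hxσ' hyσ' h) _ _ hz
  exact Relation.ReflTransGen.trans (Relation.ReflTransGen.trans move_x move_y) move_z

theorem Pres3Rel.connRel {E : ℕ → SetRel X X} (hE : ∀ i, Pres3Rel p (E i)) (u v : ℕ) :
    Pres3Rel p (connRel E u v v) :=
  (walkRel hE u v).zigzagClosure_comp (walkRel hE u v) subset_rfl

end Preservation

/-! ### Bridges -/

/-- `T` is a bridge from `u` to `v`: a relation derivable with width `r` on the variables `u` and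
`v` of a path instance that is invariant under the operations `p 0, …, p n` and does not lead out
of the reachable part. -/
structure IsBridge {X : Type} (p : ℕ → X → X → X → X) (n L : ℕ) (E : ℕ → SetRel X X)
    (u v r : ℕ) (T : SetRel X X) : Prop where
  preserved : ∀ k ≤ n, Pres3Rel (p k) T
  mem_reach : ∀ {a b : X}, (a, b) ∈ T → a ∈ reach E u → b ∈ reach E v
  derivable : (pathSystem L E).Derivable r (relAt u v T)

namespace IsBridge

variable {X : Type} {p : ℕ → X → X → X → X} {n L u v w r s : ℕ} {B : ℕ → Set X}
  {E : ℕ → SetRel X X} {S T : SetRel X X}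

theorem mono (h : IsBridge p n L E u v r T) (hrs : r ≤ s) : IsBridge p n L E u v s T :=
  ⟨h.preserved, h.mem_reach, h.derivable.mono hrs⟩

theorem id : IsBridge p n L E u u 0 SetRel.id where
  preserved _ _ := by
    rintro ⟨a, _⟩ ⟨b, _⟩ ⟨c, _⟩ rfl rfl rfl
    rfl
  mem_reach := by
    rintro a _ rfl ha
    exact ha
  derivable := by
    have htop : relAt u u SetRel.id = (Set.univ : Set (ℕ → X)) :=
      Set.eq_univ_of_forall fun _ => rfl
    exact htop ▸ .refl

theorem edge (hE : ∀ k ≤ n, ∀ i, Pres3Rel (p k) (E i)) (hu : u < L) :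
    IsBridge p n L E u (u + 1) 2 (E u) where
  preserved k hk := hE k hk u
  mem_reach hab ha := mem_reach_succ.2 ⟨_, ha, hab⟩
  derivable := .of_solutionsOn_subset Finset.card_le_two (dependsOn_relAt _ _ _)
    (solutionsOn_pathSystem_subset hu subset_rfl)

theorem comp (hS : IsBridge p n L E u v r S) (hT : IsBridge p n L E v w s T) :
    IsBridge p n L E u w (r + s + 4) (S ○ T) where
  preserved k hk := (hS.preserved k hk).comp (hT.preserved k hk)
  mem_reach := fun ⟨_, hac, hcb⟩ ha => hT.mem_reach hcb (hS.mem_reach hac ha)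
  derivable := by
    have hinter := hS.derivable.inter hT.derivable (dependsOn_relAt _ _ _) Finset.card_le_two
    refine (hinter.of_subset (fun s hs => ?_) (dependsOn_relAt _ _ _) Finset.card_le_two).mono
      (by lia)
    exact ⟨s v, hs.1, hs.2⟩

theorem connRel (hE : ∀ k ≤ n, ∀ i, Pres3Rel (p k) (E i)) (hsub : IsSubdirect B E u v)
    (huv : u ≤ v) (hv : v ≤ L) (hback : ∀ e, u ≤ e → e < v → ¬IsBackward E e) :
    IsBridge p n L E u v 3 (connRel E u v v) where
  preserved k hk := Pres3Rel.connRel (hE k hk) u v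
  mem_reach := mem_reach_of_mem_connRel huv hback
  derivable := derivable_connRel hsub hv huv le_rfl

/-- The stretch is cut at its backward edges, and the pieces between them are bridged by
connectivity relations. -/
theorem exists_of_isSubdirect (hE : ∀ k ≤ n, ∀ i, Pres3Rel (p k) (E i))
    (hsub : IsSubdirect B E u v) (huv : u ≤ v) (hv : v ≤ L) :
    ∃ T, IsBridge p n L E u v (3 + 13 * (backwardEdges E u v).card) T := by
  induction hs : backwardEdges E u v using Finset.induction_on_max generalizing v with
  | empty =>
    refine ⟨_, connRel hE hsub huv hv fun e hue hev hback => ?_⟩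
    exact Finset.notMem_empty e (hs ▸ mem_backwardEdges.2 ⟨⟨hue, hev⟩, hback⟩)
  | insert e s hmax ih =>
    have he : e ∈ backwardEdges E u v := hs ▸ Finset.mem_insert_self e s
    obtain ⟨⟨hue, hev⟩, -⟩ := mem_backwardEdges.1 he
    have hes : e ∉ s := fun h => (hmax e h).false
    have hlast {i : ℕ} (hei : e < i) (hiv : i < v) : ¬IsBackward E i := fun hback => by
      have hi : i ∈ insert e s := hs ▸ mem_backwardEdges.2 ⟨⟨hue.trans hei.le, hiv⟩, hback⟩
      rcases Finset.mem_insert.1 hi with rfl | hi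
      exacts [hei.false, hei.not_gt (hmax i hi)]
    have hbefore : backwardEdges E u e = s := by
      ext i
      have hi : i ∈ backwardEdges E u v ↔ i = e ∨ i ∈ s := by rw [hs, Finset.mem_insert]
      have hlt := hmax i
      rw [mem_backwardEdges] at hi ⊢
      grind
    obtain ⟨T, hT⟩ := ih (hsub.mono le_rfl hev.le) hue (hev.le.trans hv) hbefore
    have hrest := connRel hE (hsub.mono (hue.trans e.le_succ) le_rfl) hev hv
      fun i hi hiv => hlast hi hiv
    refine ⟨_, ((hT.comp (edge hE (hev.trans_le hv))).comp hrest).mono ?_⟩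
    rw [Finset.card_insert_of_notMem hes]
    lia

end IsBridge

/-! ### Path instances with small layers -/

section BoundedPaths

/-- The edge relations `E i` join layers `B i` of size at most `d` and are invariant under the
operations `p 0, …, p n`. -/
structure IsBoundedPath {X : Type} (p : ℕ → X → X → X → X) (n d : ℕ) (B : ℕ → Set X)
    (E : ℕ → SetRel X X) : Prop where
  subset : ∀ i, E i ⊆ B i ×ˢ B (i + 1)
  preserved : ∀ k ≤ n, ∀ i, Pres3Rel (p k) (E i)
  encard_le : ∀ i, (B i).encard ≤ d

/-- The elements of layer `i` that are consistent with the edge relations before and after it, in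
a path of length `L`. -/
def core {X : Type*} (L : ℕ) (E : ℕ → SetRel X X) (i : ℕ) : Set X :=
  {x | (i < L → x ∈ (E i).dom) ∧ ∀ j < L, j + 1 = i → x ∈ (E j).cod}

/-- The path contracted along `q`: its variable `i` stands for the variable `q i`, and consecutive
variables are related by `T i` within the cores. -/
def contract {X : Type*} (L : ℕ) (E : ℕ → SetRel X X) (q : ℕ → ℕ) (T : ℕ → SetRel X X) (i : ℕ) :
    SetRel X X :=
  T i ∩ core L E (q i) ×ˢ core L E (q (i + 1))

theorem dependsOn_apply_mem {V X : Type*} (v : V) (S : Set X) :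
    DependsOn (· ∈ {s : V → X | s v ∈ S}) (({v} : Finset V) : Set V) :=
  fun s t h => by simp only [Set.mem_ofPred_eq, h v (by simp)]

theorem derivable_core {X : Type*} (L : ℕ) (E : ℕ → SetRel X X) (i : ℕ) :
    (pathSystem L E).Derivable 3 {s | s i ∈ core L E i} := by
  refine .of_solutionsOn_subset (Z := {i - 1, i, i + 1}) Finset.card_le_three
    ((dependsOn_apply_mem i _).mono (by simp)) fun s hs => ⟨fun hi => ?_, ?_⟩
  · exact ⟨s (i + 1), solutionsOn_pathSystem_subset hi (Finset.subset_insert _ _) hs⟩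
  · rintro j hj rfl
    exact ⟨s j, solutionsOn_pathSystem_subset hj (by simp [Finset.insert_subset_iff]) hs⟩

theorem Pres3Set.core {X : Type} {p : X → X → X → X} {E : ℕ → SetRel X X}
    (hE : ∀ i, Pres3Rel p (E i)) (L i : ℕ) : Pres3Set p (core L E i) := by
  rintro x y z ⟨hx, hx'⟩ ⟨hy, hy'⟩ ⟨hz, hz'⟩
  constructor
  · intro hi
    obtain ⟨⟨a, ha⟩, ⟨b, hb⟩, ⟨c, hc⟩⟩ := And.intro (hx hi) (And.intro (hy hi) (hz hi))
    exact ⟨p a b c, hE i _ _ _ ha hb hc⟩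
  · intro j hj hji
    obtain ⟨⟨a, ha⟩, ⟨b, hb⟩, ⟨c, hc⟩⟩ :=
      And.intro (hx' j hj hji) (And.intro (hy' j hj hji) (hz' j hj hji))
    exact ⟨p a b c, hE j _ _ _ ha hb hc⟩

variable {X : Type} {p : ℕ → X → X → X → X} {n d L u v i : ℕ} {B : ℕ → Set X}
  {E : ℕ → SetRel X X}

theorem reach_contract_subset {r : ℕ} {q : ℕ → ℕ} {T : ℕ → SetRel X X}
    (hT : ∀ i, IsBridge p n L E (q i) (q (i + 1)) r (T i)) (hq : q 0 = 0) (i : ℕ) :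
    reach (contract L E q T) i ⊆ reach E (q i) := by
  induction i with
  | zero => simp only [hq, reach_zero, subset_rfl]
  | succ i ih =>
    intro b hb
    obtain ⟨a, ha, hab⟩ := mem_reach_succ.1 hb
    exact (hT i).mem_reach hab.1 (ih ha)

theorem derivable_of_contract {r M : ℕ} {q : ℕ → ℕ} {T : ℕ → SetRel X X}
    (hT : ∀ i, IsBridge p n L E (q i) (q (i + 1)) r (T i))
    (h : (pathSystem L (contract L E q T)).Derivable M ∅) :
    (pathSystem L E).Derivable (max r 6 + 1 * M) ∅ := by
  refine ConstraintSystem.Interderivable.preimage (Φ := fun s i => s (q i))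
    (bag := fun i => {q i}) (pathSystem_finite _ _) (fun i => (Finset.card_singleton _).le)
    (fun i s t hst => hst (q i) (by simp)) ?_ h
  rintro _ ⟨i, -, rfl⟩
  have hcore := (derivable_core L E (q i)).inter (derivable_core L E (q (i + 1)))
    (dependsOn_apply_mem _ _) (Finset.card_singleton (q i)).le
  exact (hT i).derivable.inter hcore (dependsOn_relAt _ _ _) Finset.card_le_two

namespace IsBoundedPath

theorem core_subset (h : IsBoundedPath p n d B E) (hL : 0 < L) (hi : i ≤ L) :
    core L E i ⊆ B i := by
  rintro x ⟨hdom, hcod⟩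
  rcases hi.lt_or_eq with hiL | rfl
  · obtain ⟨y, hxy⟩ := hdom hiL
    exact (h.subset i hxy).1
  · obtain ⟨y, hyx⟩ := hcod (i - 1) (by lia) (by lia)
    have := (h.subset (i - 1) hyx).2
    rwa [Nat.sub_add_cancel hL] at this

theorem isSubdirect (h : IsBoundedPath p n d B E) (hv : v ≤ L)
    (hcore : ∀ i, u ≤ i → i ≤ v → core L E i = B i) : IsSubdirect B E u v := by
  intro i hui hiv
  constructor
  · refine Set.Subset.antisymm (fun x ⟨y, hxy⟩ => (h.subset i hxy).1) ?_
    exact (hcore i hui hiv.le).symm.subset.trans fun x hx => hx.1 (hiv.trans_le hv)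
  · refine Set.Subset.antisymm (fun y ⟨x, hxy⟩ => (h.subset i hxy).2) ?_
    exact (hcore (i + 1) (by lia) hiv).symm.subset.trans
      fun x hx => hx.2 i (hiv.trans_le hv) rfl

/-- The only place where the Hagemann–Mitschke identities enter the induction: they bound the
number of backward edges. -/
theorem exists_isBridge (n d : ℕ) : ∃ r : ℕ, ∀ {X : Type} {p : ℕ → X → X → X → X} {L u v : ℕ}
    {B : ℕ → Set X} {E : ℕ → SetRel X X}, IsHMChain n p → IsBoundedPath p n d B E → u ≤ v →
    v ≤ L → (∀ i, u < i → i < v → core L E i = B i) → ∃ T, IsBridge p n L E u v r T := by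
  obtain ⟨N, hN⟩ := exists_card_backwardEdges_le n d
  refine ⟨15 + 13 * N, fun {X p L u v B E} hp h huv hv hcore => ?_⟩
  rcases huv.eq_or_lt with rfl | huv
  · exact ⟨_, IsBridge.id.mono (Nat.zero_le _)⟩
  obtain ⟨w, rfl⟩ := Nat.exists_eq_add_of_lt huv
  rcases w.eq_zero_or_pos with rfl | hw
  · exact ⟨_, (IsBridge.edge h.preserved hv).mono (by lia)⟩
  have hsub : IsSubdirect B E (u + 1) (u + w) :=
    h.isSubdirect (by lia) fun i hi hi' => hcore i hi (by lia)
  obtain ⟨T, hT⟩ := IsBridge.exists_of_isSubdirect h.preserved hsub (by lia) (by lia : u + w ≤ L)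
  have hcard := hN hp h.preserved h.encard_le hsub
  exact ⟨_, (((IsBridge.edge h.preserved (by lia)).comp hT).comp
    (IsBridge.edge h.preserved hv)).mono (by lia)⟩

theorem contract_of_isBridge {r : ℕ} {q : ℕ → ℕ} {T : ℕ → SetRel X X} (h : IsBoundedPath p n d B E)
    (hT : ∀ i, IsBridge p n L E (q i) (q (i + 1)) r (T i)) {d' : ℕ}
    (hcard : ∀ i, (core L E (q i)).encard ≤ d') :
    IsBoundedPath p n d' (core L E ∘ q) (contract L E q T) where
  subset i := Set.inter_subset_right
  preserved k hk i := by
    have hcore := Pres3Set.core (h.preserved k hk) L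
    rintro _ _ _ ⟨hx, hx'⟩ ⟨hy, hy'⟩ ⟨hz, hz'⟩
    exact ⟨(hT i).preserved k hk _ _ _ hx hy hz, hcore _ _ _ _ hx'.1 hy'.1 hz'.1,
      hcore _ _ _ _ hx'.2 hy'.2 hz'.2⟩
  encard_le := hcard

theorem derivable_empty_of_encard_le_one [Nonempty X] (h : IsBoundedPath p n 1 B E)
    (hreach : reach E L = ∅) : (pathSystem L E).Derivable 2 ∅ := by
  by_cases hne : ∃ i < L, E i = ∅
  · obtain ⟨i, hi, hEi⟩ := hne
    refine .of_solutionsOn_subset (Z := {i, i + 1}) Finset.card_le_two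
      ((dependsOn_const False).mono (Set.empty_subset _)) ?_
    have hempty := solutionsOn_pathSystem_subset (E := E) hi subset_rfl
    rwa [hEi] at hempty
  push Not at hne
  have hlayer (i : ℕ) : (B i).Subsingleton := Set.encard_le_one_iff_subsingleton.1 (h.encard_le i)
  have hnonempty (i : ℕ) (hi : i ≤ L) : (reach E i).Nonempty ∧ B i ⊆ reach E i := by
    induction i with
    | zero => simp
    | succ i ih =>
      obtain ⟨x, hx⟩ := hne i hi
      obtain ⟨hx₁, hx₂⟩ := h.subset i hx
      have hreach₁ : x.1 ∈ reach E i := (ih (by lia)).2 hx₁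
      have hreach₂ : x.2 ∈ reach E (i + 1) := mem_reach_succ.2 ⟨_, hreach₁, hx⟩
      exact ⟨⟨_, hreach₂⟩, fun y hy => hlayer _ hx₂ hy ▸ hreach₂⟩
  exact absurd hreach (hnonempty L le_rfl).1.ne_empty

end IsBoundedPath

/-! ### Contracting a path to its stops -/

/-- The variables kept when the layer size `d + 1` is lowered to `d`. -/
def IsStop {X : Type*} (d L : ℕ) (E : ℕ → SetRel X X) (i : ℕ) : Prop :=
  i = 0 ∨ i = L ∨ i < L ∧ (core L E i).encard ≤ d

open Classical in
/-- The last stop up to the variable `i`. -/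
noncomputable def lastStop {X : Type*} (d L : ℕ) (E : ℕ → SetRel X X) (i : ℕ) : ℕ :=
  Nat.findGreatest (IsStop d L E) i

section LastStop

variable {X : Type*} {d L i : ℕ} {E : ℕ → SetRel X X}

theorem IsStop.le (h : IsStop d L E i) : i ≤ L := by
  rcases h with rfl | rfl | h
  exacts [L.zero_le, le_rfl, h.1.le]

theorem isStop_lastStop (d L : ℕ) (E : ℕ → SetRel X X) (i : ℕ) :
    IsStop d L E (lastStop d L E i) := by
  classical exact Nat.findGreatest_spec (P := IsStop d L E) i.zero_le (.inl rfl)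

theorem lastStop_of_isStop (h : IsStop d L E i) : lastStop d L E i = i := by
  classical exact Nat.findGreatest_eq h

theorem lastStop_mono (d L : ℕ) (E : ℕ → SetRel X X) : Monotone (lastStop d L E) := by
  classical exact fun _ _ h => Nat.findGreatest_mono_right (IsStop d L E) h

theorem not_isStop_of_lastStop_lt {j : ℕ} (hij : lastStop d L E i < j)
    (hj : j < lastStop d L E (i + 1)) : ¬IsStop d L E j := by
  classical
  exact Nat.findGreatest_is_greatest hij (Nat.lt_succ_iff.1 (hj.trans_le (Nat.findGreatest_le _)))

end LastStop

theorem IsBoundedPath.encard_core_lastStop_le {X : Type} {p : ℕ → X → X → X → X} {n d d' L : ℕ}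
    {B : ℕ → Set X} {E : ℕ → SetRel X X} (h : IsBoundedPath p n d' B E) (hL : 0 < L)
    (hfirst : (B 0).encard ≤ 1) (hlast : (B L).encard ≤ 1) (hd : 1 ≤ d) (i : ℕ) :
    (core L E (lastStop d L E i)).encard ≤ d := by
  have hone : (1 : ℕ∞) ≤ d := by exact_mod_cast hd
  rcases isStop_lastStop d L E i with hi | hi | hi
  · exact hi ▸ (Set.encard_le_encard (h.core_subset hL L.zero_le)).trans (hfirst.trans hone)
  · exact hi.symm ▸ (Set.encard_le_encard (h.core_subset hL le_rfl)).trans (hlast.trans hone)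
  · exact hi.2

theorem IsBoundedPath.core_eq_of_not_isStop {X : Type} {p : ℕ → X → X → X → X} {n d L i : ℕ}
    {B : ℕ → Set X} {E : ℕ → SetRel X X} (h : IsBoundedPath p n (d + 1) B E) (hi : i ≤ L)
    (not_isStop : ¬IsStop d L E i) : core L E i = B i := by
  simp only [IsStop, not_or, not_and, not_le] at not_isStop
  obtain ⟨hi₀, hiL, hcard⟩ := not_isStop
  have hsub := h.core_subset (by lia) hi
  refine ((Set.finite_of_encard_le_coe (h.encard_le i)).subset hsub).eq_of_subset_of_encard_le
    hsub ((h.encard_le i).trans ?_)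
  exact_mod_cast Order.add_one_le_of_lt (hcard (by lia))

/-- Variables with a small core are kept, and the stretches between them, on which the path is
subdirect, are replaced by bridges; this lowers the size of the layers. -/
theorem IsBoundedPath.exists_derivable_empty (n d : ℕ) : ∃ M : ℕ, ∀ {X : Type} [Nonempty X]
    {p : ℕ → X → X → X → X} {L : ℕ} {B : ℕ → Set X} {E : ℕ → SetRel X X}, IsHMChain n p →
    IsBoundedPath p n (d + 1) B E → (B 0).encard ≤ 1 → (B L).encard ≤ 1 → reach E L = ∅ →
    (pathSystem L E).Derivable M ∅ := by
  induction d with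
  | zero => exact ⟨2, fun _ h _ _ hreach => h.derivable_empty_of_encard_le_one hreach⟩
  | succ d ih =>
    obtain ⟨M, hM⟩ := ih
    obtain ⟨r, hr⟩ := exists_isBridge n (d + 2)
    refine ⟨max r 6 + 1 * M, fun {X _ p L B E} hp h hfirst hlast hreach => ?_⟩
    have hL : 0 < L := by
      by_contra! hL
      exact Set.univ_nonempty.ne_empty (reach_zero E ▸ Nat.le_zero.1 hL ▸ hreach)
    let q := lastStop (d + 1) L E
    have hq₀ : q 0 = 0 := lastStop_of_isStop (.inl rfl)
    have hqL : q L = L := lastStop_of_isStop (.inr (.inl rfl))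
    have hqle (i : ℕ) : q i ≤ L := (isStop_lastStop _ _ _ i).le
    choose T hT using fun i => hr hp h (lastStop_mono (d + 1) L E i.le_succ) (hqle (i + 1))
      fun j hij hji => h.core_eq_of_not_isStop (hji.le.trans (hqle _))
        (not_isStop_of_lastStop_lt hij hji)
    have hsmall := h.contract_of_isBridge hT (h.encard_core_lastStop_le hL hfirst hlast d.succ_pos)
    refine derivable_of_contract hT (hM hp hsmall ?_ ?_ ?_)
    · exact (Set.encard_le_encard (hq₀ ▸ h.core_subset hL L.zero_le)).trans hfirst
    · have hsub : core L E (q L) ⊆ B L := hqL.symm ▸ h.core_subset hL le_rfl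
      exact (Set.encard_le_encard hsub).trans hlast
    · have hsub : reach (contract L E q T) L ⊆ reach E (q L) := reach_contract_subset hT hq₀ L
      rwa [hqL, hreach, Set.subset_empty_iff] at hsub

end BoundedPaths

/-! ### From symmetric derivations to the Datalog program -/

section Datalog

variable {A V : Type} {𝔸 : RelStruct A} {I : Instance A V} {M r : ℕ}

theorem Derives.comp_mem {f : V → A} (hf : I.Sol f) {k : ℕ} {ρ : Fin k → V}
    {R : Set (Fin k → A)} (h : Derives 𝔸 r I ρ R) : f ∘ ρ ∈ R := by
  induction h with
  | base ρ R h => exact hf _ h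
  | step rule ω _ hedb ih => exact rule.consistent (f ∘ ω) ih fun a ha => hf _ (hedb a ha)

theorem DerivesGoal.not_satisfiable (h : DerivesGoal 𝔸 r I) : ¬I.Satisfiable := by
  rintro ⟨f, hf⟩
  obtain ⟨k, ρ, -, hρ⟩ := h
  exact hρ.comp_mem hf

theorem Derives.of_forall_holds {a : Atom A r} (ha : a.arity ≤ r) (hholds : ∀ f, a.holds f)
    (ω : Fin r → V) : Derives 𝔸 r I (ω ∘ a.scope) a.rel :=
  .step (rule :=
    { head := a
      idb := none
      edb := []
      head_arity := ha
      idb_arity := by simp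
      edb_arity := by simp
      edb_basic := by simp
      nodup := .nil
      consistent := fun f _ _ => hholds f
      mirror := by simp }) ω (by simp) (by simp)

theorem Derives.of_holds_iff {a b : Atom A r} (ha : a.arity ≤ r) (hb : b.arity ≤ r)
    {T : Set (Atom A r)} (hT : T.Finite) (harity : ∀ t ∈ T, t.arity ≤ r)
    (hbasic : ∀ t ∈ T, ⟨t.arity, t.rel⟩ ∈ 𝔸.basic)
    (hiff : ∀ f, (∀ t ∈ T, t.holds f) → (a.holds f ↔ b.holds f)) {ω : Fin r → V}
    (hω : ∀ t ∈ T, ⟨t.arity, ω ∘ t.scope, t.rel⟩ ∈ I.constraints)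
    (h : Derives 𝔸 r I (ω ∘ a.scope) a.rel) : Derives 𝔸 r I (ω ∘ b.scope) b.rel := by
  have hmem {t : Atom A r} : t ∈ hT.toFinset.toList ↔ t ∈ T := by simp
  exact .step (rule :=
    { head := b
      idb := some a
      edb := hT.toFinset.toList
      head_arity := hb
      idb_arity := by simpa using ha
      edb_arity := fun t ht => harity t (hmem.1 ht)
      edb_basic := fun t ht => hbasic t (hmem.1 ht)
      nodup := hT.toFinset.nodup_toList
      consistent := fun f hf hedb => (hiff f fun t ht => hedb t (hmem.2 ht)).1 (hf a rfl)
      mirror := by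
        rintro _ ⟨⟩ f hf hedb
        exact (hiff f fun t ht => hedb t (hmem.2 ht)).2 hf })
    ω (by rintro _ ⟨⟩; exact h) fun t ht => hω t (hmem.1 ht)

open Classical in
/-- A constraint of an instance, as a local constraint on assignments. -/
noncomputable def localConstraint (c : Σ k : ℕ, (Fin k → V) × Set (Fin k → A)) :
    LocalConstraint V A where
  scope := Finset.univ.image c.2.1
  rel := {f | f ∘ c.2.1 ∈ c.2.2}
  dependsOn := fun f g hfg => by
    have hcomp : f ∘ c.2.1 = g ∘ c.2.1 := funext fun i => hfg _ (by simp)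
    simp only [Set.mem_ofPred_eq, hcomp]

theorem coe_scope_localConstraint (c : Σ k : ℕ, (Fin k → V) × Set (Fin k → A)) :
    ((localConstraint c).scope : Set V) = Set.range c.2.1 := by
  simp [localConstraint]

/-- The constraint system underlying an instance. -/
def Instance.system (I : Instance A V) : ConstraintSystem V A :=
  localConstraint '' I.constraints

/-- A constraint, as an atom whose variables are coded by `e`. -/
def constraintAtom (e : V → Fin r) (c : Σ k : ℕ, (Fin k → V) × Set (Fin k → A)) : Atom A r :=
  ⟨c.1, e ∘ c.2.1, c.2.2⟩

theorem finite_constraintAtom_image (hfin : 𝔸.basic.Finite) (hI : IsCSPInstance 𝔸 I)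
    (e : V → Fin r) : (constraintAtom e '' I.constraints).Finite := by
  have := hfin.to_subtype
  refine (Set.finite_range fun x : Σ b : 𝔸.basic, Fin b.1.1 → Fin r =>
    (⟨x.1.1.1, x.2, x.1.1.2⟩ : Atom A r)).subset ?_
  rintro _ ⟨c, hc, rfl⟩
  exact ⟨⟨⟨_, hI c hc⟩, e ∘ c.2.1⟩, rfl⟩

theorem comp_mem_image_comp_iff {k : ℕ} {ρ : Fin k → V} {R : Set (V → A)}
    (hR : DependsOn (· ∈ R) (Set.range ρ)) {f : V → A} : f ∘ ρ ∈ (· ∘ ρ) '' R ↔ f ∈ R := by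
  refine ⟨fun ⟨g, hg, hgf⟩ => ?_, Set.mem_image_of_mem _⟩
  exact (hR (Set.forall_mem_range.2 fun i => congrFun hgf i)).mp hg

/-- The rule behind this transfer has the constraints on `U` as its non-IDB atoms, with the
elements of `U` as its variables. -/
theorem Derives.of_mem_iff_of_solutionsOn [Nonempty V] (hfin : 𝔸.basic.Finite)
    (harity : ∀ b ∈ 𝔸.basic, b.1 ≤ M + 1) (hI : IsCSPInstance 𝔸 I) {U : Finset V}
    (hU : U.card ≤ M) {k l : ℕ} {ρ : Fin k → V} {σ : Fin l → V} (hk : k ≤ M + 1) (hl : l ≤ M + 1)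
    (hρ : Set.range ρ ⊆ U) (hσ : Set.range σ ⊆ U) {R S : Set (V → A)}
    (hR : DependsOn (· ∈ R) (Set.range ρ)) (hS : DependsOn (· ∈ S) (Set.range σ))
    (hRS : ∀ f ∈ I.system.solutionsOn U, f ∈ R ↔ f ∈ S)
    (h : Derives 𝔸 (M + 1) I ρ ((· ∘ ρ) '' R)) : Derives 𝔸 (M + 1) I σ ((· ∘ σ) '' S) := by
  obtain ⟨e, he⟩ := exists_injOn_fin (s := (U : Set V)) (by simpa using hU)
  let ω := Function.invFunOn e U
  have hω : Set.LeftInvOn ω e U := he.leftInvOn_invFunOn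
  have hcode {m : ℕ} {τ : Fin m → V} (hτ : Set.range τ ⊆ U) : ω ∘ e ∘ τ = τ :=
    funext fun i => hω (hτ (Set.mem_range_self i))
  let T := constraintAtom e '' {c ∈ I.constraints | Set.range c.2.1 ⊆ U}
  have hT : T.Finite :=
    (finite_constraintAtom_image hfin hI e).subset (Set.image_mono (Set.sep_subset _ _))
  have hiff (g : Fin (M + 1) → A) (hg : ∀ t ∈ T, t.holds g) :
      g ∘ e ∘ ρ ∈ (· ∘ ρ) '' R ↔ g ∘ e ∘ σ ∈ (· ∘ σ) '' S := by
    rw [← Function.comp_assoc, ← Function.comp_assoc, comp_mem_image_comp_iff hR,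
      comp_mem_image_comp_iff hS]
    refine hRS _ ?_
    rintro _ ⟨c, hc, rfl⟩ hcU
    rw [← Finset.coe_subset, coe_scope_localConstraint] at hcU
    exact hg _ (Set.mem_image_of_mem _ ⟨hc, hcU⟩)
  have hcoded : Derives 𝔸 (M + 1) I (ω ∘ e ∘ ρ) ((· ∘ ρ) '' R) := by rwa [hcode hρ]
  have := Derives.of_holds_iff (a := ⟨k, e ∘ ρ, (· ∘ ρ) '' R⟩) (b := ⟨l, e ∘ σ, (· ∘ σ) '' S⟩)
    hk hl hT ?_ ?_ hiff ?_ hcoded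
  · rwa [hcode hσ] at this
  · rintro _ ⟨c, hc, rfl⟩
    exact harity _ (hI c hc.1)
  · rintro _ ⟨c, hc, rfl⟩
    exact hI c hc.1
  · rintro _ ⟨c, hc, rfl⟩
    exact (hcode hc.2).symm ▸ hc.1

theorem exists_range_eq_coe_finset (Z : Finset V) : ∃ ρ : Fin Z.card → V, Set.range ρ = Z :=
  ⟨fun i => Z.equivFin.symm i, by
    rw [← Function.comp_def, Z.equivFin.symm.surjective.range_comp, Subtype.range_coe]⟩

theorem ConstraintSystem.Derivable.exists_derives [Nonempty V] (hfin : 𝔸.basic.Finite)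
    (harity : ∀ b ∈ 𝔸.basic, b.1 ≤ M + 1) (hI : IsCSPInstance 𝔸 I) (hr : 2 * r ≤ M)
    {R : Set (V → A)} (h : I.system.Derivable r R) :
    ∃ k ≤ r, ∃ ρ : Fin k → V, DependsOn (· ∈ R) (Set.range ρ) ∧
      Derives 𝔸 (M + 1) I ρ ((· ∘ ρ) '' R) := by
  classical
  induction h with
  | refl =>
    let ω : Fin (M + 1) → V := fun _ => Classical.arbitrary V
    refine ⟨0, r.zero_le, ω ∘ Fin.elim0, (dependsOn_const True).mono (Set.empty_subset _),
      Derives.of_forall_holds (a := ⟨0, Fin.elim0, (· ∘ ω ∘ Fin.elim0) '' Set.univ⟩)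
        (Nat.zero_le _) (fun f => ?_) ω⟩
    exact ⟨fun _ => f 0, trivial, Subsingleton.elim _ _⟩
  | @tail R S _ hstep ih =>
    obtain ⟨k, hk, ρ, hR, hρ⟩ := ih
    obtain ⟨Z, hZ, -, hS, hRS⟩ := hstep
    obtain ⟨σ, hσ⟩ := exists_range_eq_coe_finset Z
    rw [← hσ] at hS
    have hcard : (Z ∪ Finset.univ.image ρ).card ≤ M := by
      have hρcard : (Finset.univ.image ρ).card ≤ k := by
        simpa using Finset.card_image_le (s := Finset.univ) (f := ρ)
      have := Finset.card_union_le Z (Finset.univ.image ρ)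
      lia
    refine ⟨Z.card, hZ, σ, hS, Derives.of_mem_iff_of_solutionsOn hfin harity hI hcard (by lia)
      (by lia) (by simp) (by simp [hσ]) hR hS (fun f hf => hRS f fun c hc hcZ => ?_) hρ⟩
    exact hf c hc (hcZ.trans Finset.subset_union_left)

theorem ConstraintSystem.Derivable.derivesGoal [Nonempty V] (hfin : 𝔸.basic.Finite)
    (harity : ∀ b ∈ 𝔸.basic, b.1 ≤ M + 1) (hI : IsCSPInstance 𝔸 I) (hr : 2 * r ≤ M)
    (h : I.system.Derivable r ∅) : DerivesGoal 𝔸 (M + 1) I := by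
  obtain ⟨k, hk, ρ, -, hρ⟩ := h.exists_derives hfin harity hI hr
  exact ⟨k, ρ, by lia, by simpa only [Set.image_empty] using hρ⟩

theorem derivesGoal_of_isEmpty [IsEmpty V] (harity : ∀ b ∈ 𝔸.basic, b.1 ≤ r)
    (hI : IsCSPInstance 𝔸 I) (hunsat : ¬I.Satisfiable) : DerivesGoal 𝔸 r I := by
  obtain ⟨⟨k, σ, R⟩, hc, hR⟩ : ∃ c ∈ I.constraints, isEmptyElim ∘ c.2.1 ∉ c.2.2 := by
    by_contra! hsol
    exact hunsat ⟨isEmptyElim, hsol⟩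
  have := Function.isEmpty σ
  obtain rfl : R = ∅ :=
    Set.eq_empty_of_forall_notMem fun g hg => hR ((Subsingleton.elim g _).subst hg)
  exact ⟨k, σ, harity _ (hI _ hc), .base _ _ hc⟩

end Datalog

/-! ### Path decompositions -/

section PathDecompositions

variable {V W A : Type} {F : ConstraintSystem W A} {G : ConstraintSystem V A} {U : Finset W}
  {bag : ℕ → Finset W} {w L n j : ℕ} {a₀ : A} {p : ℕ → A → A → A → A} {h : W → V}

/-- A path decomposition of width `w` of the constraints of `F`, padded by empty bags at both
ends. -/
structure IsPathDecomposition (F : ConstraintSystem W A) (w L : ℕ) (bag : ℕ → Finset W) :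
    Prop where
  card_le : ∀ j, (bag j).card ≤ w + 1
  first_eq_empty : bag 0 = ∅
  last_eq_empty : bag L = ∅
  exists_mem : ∀ v, ∃ j < L, v ∈ bag j
  convex : ∀ {i j k v}, i ≤ j → j ≤ k → v ∈ bag i → v ∈ bag k → v ∈ bag j
  exists_scope_subset : ∀ c ∈ F, ∃ j < L, c.scope ⊆ bag j

/-- The partial solutions of `F` on `U`, encoded as total assignments with value `a₀` outside
`U`. -/
def bagSolutions (F : ConstraintSystem W A) (a₀ : A) (U : Finset W) : Set (W → A) :=
  {x ∈ F.solutionsOn U | ∀ v ∉ U, x v = a₀}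

/-- Compatibility of partial solutions on the consecutive bags `j` and `j + 1`. -/
def bagRel (F : ConstraintSystem W A) (a₀ : A) (bag : ℕ → Finset W) (j : ℕ) :
    SetRel (W → A) (W → A) :=
  {x | x.1 ∈ bagSolutions F a₀ (bag j) ∧ x.2 ∈ bagSolutions F a₀ (bag (j + 1)) ∧
    ∀ v ∈ bag j, v ∈ bag (j + 1) → x.1 v = x.2 v}

/-- The componentwise action of a ternary operation on assignments. -/
def pointwise (q : A → A → A → A) (x y z : W → A) : W → A := fun v => q (x v) (y v) (z v)

theorem IsHMChain.pointwise (hp : IsHMChain n p) :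
    IsHMChain n fun k => CSPPaper.pointwise (W := W) (p k) := by
  obtain ⟨hidem, hfirst, hlast, hchain⟩ := hp
  exact ⟨fun k hk x => funext fun _ => hidem k hk _, fun x y z => funext fun _ => hfirst _ _ _,
    fun x y z => funext fun _ => hlast _ _ _, fun k hk x y => funext fun _ => hchain k hk _ _⟩

theorem encard_bagSolutions_le [Finite A] (F : ConstraintSystem W A) (a₀ : A) (U : Finset W) :
    (bagSolutions F a₀ U).encard ≤ (Nat.card A ^ U.card : ℕ) := by
  have hinj : Set.InjOn (fun (x : W → A) (v : U) => x v) (bagSolutions F a₀ U) := by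
    refine fun x hx y hy hxy => funext fun v => ?_
    by_cases hv : v ∈ U
    · exact congrFun hxy ⟨v, hv⟩
    · rw [hx.2 v hv, hy.2 v hv]
  calc (bagSolutions F a₀ U).encard
      = ((fun (x : W → A) (v : U) => x v) '' bagSolutions F a₀ U).encard := hinj.encard_image.symm
    _ ≤ (Set.univ : Set (U → A)).encard := Set.encard_le_encard (Set.subset_univ _)
    _ = (Nat.card A ^ U.card : ℕ) := by
      rw [Set.encard_univ, ENat.card_eq_coe_natCard, Nat.card_fun,
        Nat.card_eq_fintype_card (α := U), Fintype.card_coe]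

theorem pres3Set_bagSolutions {q : A → A → A → A} (hF : ∀ c ∈ F, Pres3Set (pointwise q) c.rel)
    (hidem : q a₀ a₀ a₀ = a₀) : Pres3Set (pointwise q) (bagSolutions F a₀ U) :=
  fun x y z hx hy hz =>
    ⟨fun c hc hcU => hF c hc x y z (hx.1 c hc hcU) (hy.1 c hc hcU) (hz.1 c hc hcU),
      fun v hv => by simp only [pointwise, hx.2 v hv, hy.2 v hv, hz.2 v hv, hidem]⟩

theorem isBoundedPath_bagRel [Finite A] (hbag : ∀ j, (bag j).card ≤ w + 1)
    (hp : IsHMChain n p) (hF : ∀ c ∈ F, ∀ k ≤ n, Pres3Set (pointwise (p k)) c.rel) :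
    IsBoundedPath (fun k => pointwise (p k)) n (Nat.card A ^ (w + 1))
      (fun j => bagSolutions F a₀ (bag j)) (bagRel F a₀ bag) where
  subset _ _ hx := ⟨hx.1, hx.2.1⟩
  preserved k hk j x y z hx hy hz := by
    have hsol (U : Finset W) : Pres3Set (pointwise (p k)) (bagSolutions F a₀ U) :=
      pres3Set_bagSolutions (fun c hc => hF c hc k hk) (hp.1 k hk a₀)
    refine ⟨hsol _ _ _ _ hx.1 hy.1 hz.1, hsol _ _ _ _ hx.2.1 hy.2.1 hz.2.1, fun v hv hv' => ?_⟩
    simp only [pointwise, hx.2.2 v hv hv', hy.2.2 v hv hv', hz.2.2 v hv hv']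
  encard_le j := by
    have hA : 0 < Nat.card A := Nat.card_pos_iff.2 ⟨⟨a₀⟩, inferInstance⟩
    exact (encard_bagSolutions_le F a₀ _).trans
      (by exact_mod_cast Nat.pow_le_pow_right hA (hbag j))

theorem IsPathDecomposition.eq_of_isWalk {s : ℕ → W → A} (hdec : IsPathDecomposition F w L bag)
    (hs : IsWalk (bagRel F a₀ bag) 0 L s) {i : ℕ} (hij : i ≤ j) (hj : j ≤ L) {v : W}
    (hi : v ∈ bag i) (hv : v ∈ bag j) : s i v = s j v := by
  induction j, hij using Nat.le_induction with
  | base => rfl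
  | succ j hij ih =>
    have hvj := hdec.convex hij j.le_succ hi hv
    exact (ih (by lia) hvj).trans ((hs j j.zero_le hj).2.2 v hvj hv)

theorem IsPathDecomposition.reach_bagRel_eq_empty (hdec : IsPathDecomposition F w L bag)
    (hF : ∀ f, ∃ c ∈ F, f ∉ c.rel) : reach (bagRel F a₀ bag) L = ∅ := by
  by_contra! hne
  obtain ⟨_, _, s, -, -, hs⟩ := hne
  choose idx hidx hmem using hdec.exists_mem
  obtain ⟨c, hc, hsc⟩ := hF fun v => s (idx v) v
  obtain ⟨j, hj, hcj⟩ := hdec.exists_scope_subset c hc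
  refine hsc ((c.dependsOn fun v hv => ?_).mp ((hs j j.zero_le hj).1.1 c hc hcj))
  rcases le_total (idx v) j with hle | hle
  · exact (hdec.eq_of_isWalk hs hle hj.le (hmem v) (hcj hv)).symm
  · exact hdec.eq_of_isWalk hs hle (hidx v).le (hcj hv) (hmem v)

/-- Renaming the variables of `F` by `h` turns its constraints into consequences of single
constraints of `G` on the same variables. -/
def RenamesInto (h : W → V) (F : ConstraintSystem W A) (G : ConstraintSystem V A) : Prop :=
  ∀ c ∈ F, ∃ d ∈ G, (d.scope : Set V) ⊆ h '' c.scope ∧ ∀ f ∈ d.rel, f ∘ h ∈ c.rel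

open Classical in
/-- The assignment on the bag `U` induced by `f` along `h`. -/
noncomputable def pullback (h : W → V) (a₀ : A) (U : Finset W) (f : V → A) : W → A :=
  U.piecewise (f ∘ h) fun _ => a₀

theorem dependsOn_pullback [DecidableEq V] (h : W → V) (a₀ : A) (U : Finset W) :
    DependsOn (pullback h a₀ U) (U.image h : Set V) := by
  refine fun f g hfg => funext fun v => ?_
  by_cases hv : v ∈ U
  · simp only [pullback, hv, Finset.piecewise_eq_of_mem, Function.comp_apply]
    exact hfg (h v) (Finset.mem_image_of_mem h hv)
  · simp only [pullback, hv, not_false_eq_true, Finset.piecewise_eq_of_notMem]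

theorem RenamesInto.pullback_mem_bagSolutions [DecidableEq V] (hFG : RenamesInto h F G)
    {Z : Finset V} (hU : U.image h ⊆ Z) {f : V → A} (hf : f ∈ G.solutionsOn Z) :
    pullback h a₀ U f ∈ bagSolutions F a₀ U := by
  classical
  refine ⟨fun c hc hcU => ?_, fun v hv => Finset.piecewise_eq_of_notMem _ _ _ hv⟩
  obtain ⟨d, hd, hscope, hrel⟩ := hFG c hc
  have hdZ : d.scope ⊆ Z := by
    refine fun v hv => hU ?_
    obtain ⟨u, hu, rfl⟩ := hscope hv
    exact Finset.mem_image_of_mem h (hcU hu)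
  refine (c.dependsOn fun v hv => ?_).mp (hrel f (hf d hd hdZ))
  exact (Finset.piecewise_eq_of_mem _ _ _ (hcU hv)).symm

theorem RenamesInto.derivable_pullback (hFG : RenamesInto h F G)
    (hbag : ∀ j, (bag j).card ≤ w + 1) (j : ℕ) :
    G.Derivable (2 * (w + 1))
      ((fun f i => pullback h a₀ (bag i) f) ⁻¹' relAt j (j + 1) (bagRel F a₀ bag j)) := by
  classical
  let Z := (bag j).image h ∪ (bag (j + 1)).image h
  have hleft : (bag j).image h ⊆ Z := Finset.subset_union_left
  have hright : (bag (j + 1)).image h ⊆ Z := Finset.subset_union_right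
  refine .of_solutionsOn_subset (Z := Z) ?_ (fun f g hfg => ?_) fun f hf => ?_
  · have := Finset.card_union_le ((bag j).image h) ((bag (j + 1)).image h)
    have := (Finset.card_image_le (s := bag j) (f := h)).trans (hbag j)
    have := (Finset.card_image_le (s := bag (j + 1)) (f := h)).trans (hbag (j + 1))
    lia
  · have heq := dependsOn_pullback h a₀ (bag j) fun v hv => hfg v (hleft hv)
    have heq' := dependsOn_pullback h a₀ (bag (j + 1)) fun v hv => hfg v (hright hv)
    simp only [Set.mem_preimage, relAt, Set.mem_ofPred_eq, heq, heq']
  · refine ⟨hFG.pullback_mem_bagSolutions hleft hf, hFG.pullback_mem_bagSolutions hright hf,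
      fun v hv hv' => ?_⟩
    simp only [pullback, hv, hv', Finset.piecewise_eq_of_mem]

theorem IsPathDecomposition.exists_derivable_empty (A : Type) [Finite A] (n w : ℕ) :
    ∃ r : ℕ, ∀ {V W : Type} [Nonempty A] {p : ℕ → A → A → A → A} {F : ConstraintSystem W A}
      {G : ConstraintSystem V A} {h : W → V} {L : ℕ} {bag : ℕ → Finset W}, IsHMChain n p →
      (∀ c ∈ F, ∀ k ≤ n, Pres3Set (pointwise (p k)) c.rel) → (∀ f, ∃ c ∈ F, f ∉ c.rel) →
      IsPathDecomposition F w L bag → RenamesInto h F G → G.Derivable r ∅ := by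
  classical
  obtain ⟨M, hM⟩ := IsBoundedPath.exists_derivable_empty n (Nat.card A ^ (w + 1))
  refine ⟨2 * (w + 1) + (w + 1) * M, fun {V W _ p F G h L bag} hp hF hunsat hdec hFG => ?_⟩
  let a₀ : A := Classical.arbitrary A
  have hpath := isBoundedPath_bagRel (a₀ := a₀) hdec.card_le hp hF
  have hlast {j : ℕ} (hj : bag j = ∅) : (bagSolutions F a₀ (bag j)).encard ≤ 1 := by
    simpa [hj] using encard_bagSolutions_le F a₀ (bag j)
  have hempty : (pathSystem L (bagRel F a₀ bag)).Derivable M ∅ :=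
    hM hp.pointwise { hpath with encard_le := fun j => (hpath.encard_le j).trans (by simp) }
      (hlast hdec.first_eq_empty) (hlast hdec.last_eq_empty) (hdec.reach_bagRel_eq_empty hunsat)
  refine ConstraintSystem.Interderivable.preimage
    (Φ := fun f j => pullback h a₀ (bag j) f) (bag := fun j => (bag j).image h)
    (pathSystem_finite L _) (fun j => Finset.card_image_le.trans (hdec.card_le j))
    (fun j => dependsOn_pullback h a₀ (bag j)) ?_ hempty
  rintro _ ⟨j, -, rfl⟩
  exact hFG.derivable_pullback hdec.card_le j

end PathDecompositions

section PathwidthDuality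

variable {V W A : Type} {𝔸 : RelStruct A}

theorem PathwidthLE.exists_isPathDecomposition {J : Instance A W} {w : ℕ} (hJ : PathwidthLE J w) :
    ∃ L bag, IsPathDecomposition J.system w L bag := by
  obtain ⟨m, U, hcover, hU, hconv, hcon⟩ := hJ
  lift U to Fin m → Finset W using fun i => (hU i).1
  let bag : ℕ → Finset W
    | 0 => ∅
    | j + 1 => if hj : j < m then U ⟨j, hj⟩ else ∅
  have hmem {v : W} {j : ℕ} : v ∈ bag j ↔ ∃ i : Fin m, i + 1 = j ∧ v ∈ U i := by
    rcases j with _ | j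
    · simp [bag]
    · by_cases hj : j < m
      · simp [bag, hj, ← Fin.ext_iff (b := ⟨j, hj⟩)]
      · simpa [bag, hj] using fun (i : Fin m) (hi : i.val = j) => absurd i.isLt (hi ▸ hj)
  refine ⟨m + 1, bag, ?_, rfl, by simp [bag], fun v => ?_, fun hij hjk hi hk => ?_, ?_⟩
  · rintro (_ | j)
    · exact Nat.zero_le _
    · by_cases hj : j < m
      · simpa [bag, hj] using (hU ⟨j, hj⟩).2
      · simp [bag, hj]
  · obtain ⟨i, hi⟩ := hcover v
    exact ⟨i + 1, by lia, hmem.2 ⟨i, rfl, hi⟩⟩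
  · obtain ⟨i, rfl, hvi⟩ := hmem.1 hi
    obtain ⟨k, rfl, hvk⟩ := hmem.1 hk
    exact hmem.2 ⟨⟨_ - 1, by lia⟩, Nat.sub_add_cancel (by lia),
      hconv i k _ (Nat.le_sub_one_of_lt hij) (Nat.sub_le_of_le_add hjk) _ hvi hvk⟩
  · rintro _ ⟨c, hc, rfl⟩
    obtain ⟨i, hi⟩ := hcon c hc
    refine ⟨i + 1, by lia, ?_⟩
    have hbag : bag (i + 1) = U i := by simp [bag]
    rwa [hbag, ← Finset.coe_subset, coe_scope_localConstraint]

theorem IsPolymorphism.pres3Set_pointwise {I : Instance A V} (hI : IsCSPInstance 𝔸 I)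
    {q : A → A → A → A} (hq : IsPolymorphism 𝔸 (ternaryOp q)) :
    ∀ c ∈ I.system, Pres3Set (pointwise q) c.rel := by
  rintro _ ⟨c, hc, rfl⟩ x y z hx hy hz
  refine hq _ (hI c hc) (fun t i => (![x, y, z] t) (c.2.1 i)) fun t => ?_
  fin_cases t
  exacts [hx, hy, hz]

theorem renamesInto_system {I : Instance A V} {J : Instance A W} {h : W → V}
    (hJI : ∀ c ∈ J.constraints, ⟨c.1, h ∘ c.2.1, c.2.2⟩ ∈ I.constraints) :
    RenamesInto h J.system I.system := by
  rintro _ ⟨c, hc, rfl⟩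
  refine ⟨_, Set.mem_image_of_mem _ (hJI c hc), ?_, fun f hf => hf⟩
  simpa only [coe_scope_localConstraint] using (Set.range_comp h c.2.1).subset

theorem HasPathwidthDuality.exists_derivable_empty [Finite A] {n w : ℕ}
    {p : ℕ → A → A → A → A} (hdual : HasPathwidthDuality 𝔸 w) (hp : IsHMChain n p)
    (hpoly : ∀ k ≤ n, IsPolymorphism 𝔸 (ternaryOp (p k))) :
    ∃ r : ℕ, ∀ {V : Type} [Nonempty V] {I : Instance A V}, IsCSPInstance 𝔸 I →
      ¬I.Satisfiable → I.system.Derivable r ∅ := by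
  obtain ⟨r, hr⟩ := IsPathDecomposition.exists_derivable_empty A n w
  refine ⟨r, fun {V _ I} hI hunsat => ?_⟩
  cases isEmpty_or_nonempty A with
  | inl hA =>
    rw [← Set.univ_eq_empty_iff.2 (inferInstance : IsEmpty (V → A))]
    exact .refl
  | inr hA =>
    obtain ⟨W, J, h, hJ, hJunsat, hwidth, hJI⟩ := hdual V I hI hunsat
    obtain ⟨L, bag, hdec⟩ := hwidth.exists_isPathDecomposition
    have hJsystem (f : W → A) : ∃ c ∈ J.system, f ∉ c.rel := by
      by_contra! hf
      exact hJunsat ⟨f, fun c hc => hf _ (Set.mem_image_of_mem _ hc)⟩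
    exact hr hp (fun c hc k hk => (hpoly k hk).pres3Set_pointwise hJ c hc) hJsystem hdec
      (renamesInto_system hJI)

end PathwidthDuality

/-- main theorem.
Let `𝔸` be a relational structure admitting a chain of `n` Hagemann–Mitschke
terms as polymorphisms, with bounded pathwidth duality (equivalently,
`CSP(𝔸)` is decided by some linear Datalog program). Then there is an `M ∈ ℕ`
such that `𝒫_𝔸^M` decides `CSP(𝔸)`: for every instance `I` of `CSP(𝔸)`,
`𝒫_𝔸^M(I) ⊢ G` iff `I` is unsatisfiable. -/
theorem statement17 {A : Type} [Finite A] (𝔸 : RelStruct A)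
    (hfin : 𝔸.basic.Finite)
    (n : ℕ) (p : ℕ → A → A → A → A) (hp : IsHMChain n p)
    (hpoly : ∀ k ≤ n, IsPolymorphism 𝔸 (ternaryOp (p k)))
    (hdual : ∃ w : ℕ, HasPathwidthDuality 𝔸 w) :
    ∃ M : ℕ, ∀ (V : Type) (I : Instance A V), IsCSPInstance 𝔸 I →
      (DerivesGoal 𝔸 M I ↔ ¬I.Satisfiable) := by
  obtain ⟨w, hw⟩ := hdual
  obtain ⟨r, hr⟩ := hw.exists_derivable_empty hp hpoly
  obtain ⟨m, hm⟩ := (hfin.image Sigma.fst).bddAbove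
  have harity : ∀ b ∈ 𝔸.basic, b.1 ≤ 2 * r + m + 1 := fun b hb =>
    (hm (Set.mem_image_of_mem _ hb)).trans (by lia)
  refine ⟨2 * r + m + 1, fun V I hI => ⟨DerivesGoal.not_satisfiable, fun hunsat => ?_⟩⟩
  rcases isEmpty_or_nonempty V with hV | hV
  · exact derivesGoal_of_isEmpty harity hI hunsat
  · exact (hr hI hunsat).derivesGoal hfin harity hI (by lia)

end CSPPaper
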